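/- For every 0 < ε < 1 there exists C > 0 such that, for p ≥ C log n / n, the binomial random graph G = G_{n,p} asymptotically almost surely satisfies the following: for every H ∈ H^ε_{n,p}(G) with G' := G ∖ H, every path P' on V, and every longest path P = v_1…v_ℓ in G' ∪ P', there exists a set U ⊆ V with |U| ≥ (1/2 + ε/4)n such that for every v ∈ U there exists a longest path Q_v in G' ∪ P' with endpoints v_ℓ and v and with V(Q_v) = V(P). -/

import Mathlib

/-!
The proof has a probabilistic and a deterministic half.

*Probabilistic half.* By Chernoff bounds (`Pr_eC_le`) and union bounds, `G_{n,p}` is a.a.s.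
pseudorandom (`PseudoRandom`, `Pr_pseudoRandom`): all degrees are at least `(1 - δ)np`, a set `A`
with `|A| ≤ εn/40` sends fewer than `(ε/2) np |A|` edges to any set of size at most `5|A|`, and
`e(A, B) ≤ p|A||B| + δpnL` whenever `|B| ≤ L`. Here `δ = ε²/6000` and `L` is about
`δn / (3 log n)`.

*Deterministic half.* Starting from the longest path `P`, rotations that fix the last vertex and use
only edges of `G' = G \ H` give longest paths on the same vertex set (`reach_path`). Let `E_t` be
the set of first vertices of the paths reached by at most `t` rotations (`ends`). As the paths are
longest, all `G'`-neighbours of such a first vertex lie on the path.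

While `|E_t| ≤ εn/40`, the set doubles in each step (`small_step`): every vertex has `G'`-degree at
least `(ε - δ)np`, so by pseudorandomness `|N(E_t)| > 5|E_t|`, whereas Pósa's observation `posa`
gives `|N(E_t)| ≤ |E_t| + 2|E_{t+1}|`. After `log₂ n + 1` steps the set is linear in size.

For a set of linear size the factor `2` in Pósa's bound is too expensive, and `P` is cut instead into
segments of length at most `L` (`linear_step`). A path obtained by `t` rotations traverses all but
at most `t` of these segments as a block, forwards or backwards. For all endpoints whose paths
traverse a segment `w` in the same direction, the neighbours in `w` lie, apart from one vertex, in
one and the same shift of `E_{t+1} ∩ w`. Summing the edge bounds over segments and the two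
directions yields `e_{G'}(A, V) ≤ p|A|(|E_{t+1}| + small)` for every linear-sized `A ⊆ E_t`. On the
other hand the degree condition on `H` leaves in `E_t` a linear-sized subset `A` of vertices of
`G'`-degree at least about `(min(|E_t|, n/2) + εn(1 - 1/80))p` (`exists_high_degree`). Hence
`|E_{t+1}| ≥ min(|E_t|, n/2) + εn/4` (`big_step`), and boundedly many further rotations give
`(1/2 + ε/4)n` endpoints (`many_ends`).
-/


open Filter Real

namespace Resilience

variable {V : Type*}

/-- The degree of a vertex, as the cardinality of its neighbourhood. -/
noncomputable def deg (G : SimpleGraph V) (v : V) : ℕ := (G.neighborSet v).ncard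

/-- The neighbourhood of a set of vertices: all vertices with a neighbour in `X`. -/
def nbhd (G : SimpleGraph V) (X : Set V) : Set V := {v | ∃ x ∈ X, G.Adj v x}

/-- The minimum degree over a set of vertices. -/
noncomputable def minDeg (G : SimpleGraph V) (X : Set V) : ℕ :=
  sInf ((fun v => deg G v) '' X)

/-- The number of edges of `G` with one endpoint in `X` and the other in `Y`. -/
noncomputable def eBetween (G : SimpleGraph V) (X Y : Set V) : ℕ :=
  {e ∈ G.edgeSet | ∃ x ∈ X, ∃ y ∈ Y, e = s(x, y)}.ncard

/-- The number of edges of `G` with both endpoints in `A`. -/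
noncomputable def eIn (G : SimpleGraph V) (A : Set V) : ℕ :=
  {e ∈ G.edgeSet | ∀ v ∈ e, v ∈ A}.ncard

/-- The graph on `V` whose edges are the consecutive pairs of the list `l`;
this lets us view a path, recorded as a list of distinct vertices, as a graph. -/
def listGraph (l : List V) : SimpleGraph V :=
  SimpleGraph.fromEdgeSet {e | ∃ q ∈ l.zip l.tail, e = s(q.1, q.2)}

/-- `l` is a (nonempty) path on `V` all of whose edges lie in `G`. -/
def IsPathOn (G : SimpleGraph V) (l : List V) : Prop :=
  l ≠ [] ∧ l.Nodup ∧ l.Chain' G.Adj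

/-- `l` is a longest path with all edges in `G`. -/
def IsLongestPathOn (G : SimpleGraph V) (l : List V) : Prop :=
  IsPathOn G l ∧ ∀ l' : List V, IsPathOn G l' → l'.length ≤ l.length

/-- `l'` is obtained from the path `l` (with fixed last endpoint) by a single rotation
within `G`, whose broken edge lies on the original path `P`.  Writing
`l = a :: t₁ ++ c :: b :: t₂`, the pivot is `b`, the new edge is `ab ∈ G`, the broken
edge is `cb` (an edge of `P`), and the rotated path is `(a :: t₁ ++ [c]).reverse ++ b :: t₂`. -/
def IsRotation (G : SimpleGraph V) (P l l' : List V) : Prop :=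
  ∃ (a c b : V) (t₁ t₂ : List V),
    l = a :: t₁ ++ c :: b :: t₂ ∧ G.Adj a b ∧ (listGraph P).Adj c b ∧
    l' = (a :: t₁ ++ [c]).reverse ++ b :: t₂

/-- The set of paths obtainable from `P` by at most `t` successive rotations within `G`
with fixed last endpoint, all broken edges lying on `P`. -/
def rotSet (G : SimpleGraph V) (P : List V) : ℕ → Set (List V)
  | 0 => {P}
  | t + 1 => rotSet G P t ∪ {l' | ∃ l ∈ rotSet G P t, IsRotation G P l l'}

/-- `R^t_{G,P,u}`: the set of endpoints of paths obtainable from `P` by at most `t`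
successive rotations within `G` with fixed last endpoint. -/
def Rset (G : SimpleGraph V) (P : List V) (t : ℕ) : Set V :=
  {x | ∃ l ∈ rotSet G P t, l.head? = some x}

/-- The family `H^ε_{n,p}` of Pósa-type subgraphs: there is an ordering of the vertices
with non-increasing degrees such that `d_H(v_i) ≤ (n-i)p - εnp` for all `i < n/2`
(1-based indexing). -/
def PosaFamily (n : ℕ) (p ε : ℝ) (H : SimpleGraph (Fin n)) : Prop :=
  ∃ v : Fin n → Fin n, Function.Bijective v ∧
    (∀ i j : Fin n, i ≤ j → deg H (v j) ≤ deg H (v i)) ∧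
    ∀ i : Fin n, ((i.1 : ℝ) + 1) < n / 2 →
      (deg H (v i) : ℝ) ≤ ((n : ℝ) - ((i.1 : ℝ) + 1)) * p - ε * n * p

/-- The family `H^{ε,δ}_{n,p}` of (shifted) Chvátal-type subgraphs, where the shift
`δn` is recorded as a natural number `s`: there is an ordering of the vertices with
non-increasing degrees such that for all `i < n/2` (1-based indexing), either
`d_H(v_i) ≤ (n-i)p - εnp` or `d_H(v_{n-i-s}) ≤ ip - εnp`. -/
def ChvatalFamily (n : ℕ) (p ε : ℝ) (s : ℕ) (H : SimpleGraph (Fin n)) : Prop :=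
  ∃ v : Fin n → Fin n, Function.Bijective v ∧
    (∀ i j : Fin n, i ≤ j → deg H (v j) ≤ deg H (v i)) ∧
    ∀ i : Fin n, ((i.1 : ℝ) + 1) < n / 2 →
      ((deg H (v i) : ℝ) ≤ ((n : ℝ) - ((i.1 : ℝ) + 1)) * p - ε * n * p ∨
       (deg H (v ⟨n - (i.1 + 1) - s - 1, by have := i.2; omega⟩) : ℝ) ≤
         ((i.1 : ℝ) + 1) * p - ε * n * p)

/-- The probability weight of a fixed graph `G` in the binomial random graph `G_{n,p}`. -/
noncomputable def weight (n : ℕ) (p : ℝ) (G : SimpleGraph (Fin n)) : ℝ :=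
  p ^ G.edgeSet.ncard * (1 - p) ^ (n.choose 2 - G.edgeSet.ncard)

open Classical in
/-- The probability that the binomial random graph `G_{n,p}` satisfies the property `Q`. -/
noncomputable def Pr (n : ℕ) (p : ℝ) (Q : SimpleGraph (Fin n) → Prop) : ℝ :=
  ∑ G : SimpleGraph (Fin n), if Q G then weight n p G else 0

/-- Property `RE(δ)` for a (connected) graph `G` on `n` vertices: for every path `P`
on the vertex set, either `G ∪ P` has a longer path, or there are at least `δn` vertices
`v`, each with a set `T v` of at least `δn` vertices `w`, such that `G ∪ P` has a path
from `v` to `w` with the same vertex set as `P`. -/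
def RE (n : ℕ) (δ : ℝ) (G : SimpleGraph (Fin n)) : Prop :=
  G.Connected ∧
  ∀ P : List (Fin n), P ≠ [] → P.Nodup →
    (∃ Q : List (Fin n), IsPathOn (G ⊔ listGraph P) Q ∧ P.length < Q.length) ∨
    (∃ S : Set (Fin n), δ * n ≤ S.ncard ∧
      ∃ T : Fin n → Set (Fin n), (∀ v ∈ S, δ * n ≤ (T v).ncard) ∧
        ∀ v ∈ S, ∀ w ∈ T v, ∃ Q : List (Fin n),
          IsPathOn (G ⊔ listGraph P) Q ∧ Q.head? = some v ∧ Q.getLast? = some w ∧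
          Q.toFinset = P.toFinset)

/-- `G₂` complements `G₁` (with respect to parameter `δ` as in `RE(δ)`): for every path
`P` on the vertex set, either `G₁ ∪ P` has a longer path, or there are sets `S`, `T v`
as in the definition of `RE(δ)` together with `v ∈ S` and `w ∈ T v` such that `vw` is an
edge of `G₁ ∪ G₂`. -/
def Complements (n : ℕ) (δ : ℝ) (G₁ G₂ : SimpleGraph (Fin n)) : Prop :=
  ∀ P : List (Fin n), P ≠ [] → P.Nodup →
    (∃ Q : List (Fin n), IsPathOn (G₁ ⊔ listGraph P) Q ∧ P.length < Q.length) ∨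
    (∃ S : Set (Fin n), δ * n ≤ S.ncard ∧
      ∃ T : Fin n → Set (Fin n), (∀ v ∈ S, δ * n ≤ (T v).ncard) ∧
        (∀ v ∈ S, ∀ w ∈ T v, ∃ Q : List (Fin n),
          IsPathOn (G₁ ⊔ listGraph P) Q ∧ Q.head? = some v ∧ Q.getLast? = some w ∧
          Q.toFinset = P.toFinset) ∧
        ∃ v ∈ S, ∃ w ∈ T v, (G₁ ⊔ G₂).Adj v w)


/-! ### The binomial random graph -/

/-- The non-loop pairs of vertices, i.e. the potential edges of a graph on `Fin n`. -/
def pairs (n : ℕ) : Finset (Sym2 (Fin n)) := Finset.univ.filter (fun e => ¬ e.IsDiag)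

lemma card_pairs (n : ℕ) : (pairs n).card = n.choose 2 := by
  have := Sym2.card_subtype_not_diag (α := Fin n)
  rw [Fintype.card_fin] at this
  rw [← this, Fintype.card_subtype, pairs]

open Classical in
/-- Probability generating identity: the expectation of a product over the edges of `G_{n,p}`
factorises over the potential edges. -/
lemma sum_weight_mul_prod (n : ℕ) (p : ℝ) (g : Sym2 (Fin n) → ℝ) :
    ∑ G : SimpleGraph (Fin n), weight n p G * ∏ e ∈ G.edgeFinset, g e
      = ∏ e ∈ pairs n, (p * g e + (1 - p)) := by
  rw [Finset.prod_add]
  refine Finset.sum_bij' (fun G _ => G.edgeFinset)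
    (fun s _ => SimpleGraph.fromEdgeSet (s : Set (Sym2 (Fin n)))) ?_ ?_ ?_ ?_ ?_
  · intro G _
    rw [Finset.mem_powerset]
    intro e he
    simp only [pairs, Finset.mem_filter, Finset.mem_univ, true_and]
    exact G.not_isDiag_of_mem_edgeFinset he
  · intro s _
    exact Finset.mem_univ _
  · intro G _
    simp
  · intro s hs
    rw [Finset.mem_powerset] at hs
    ext e
    simp only [SimpleGraph.mem_edgeFinset, SimpleGraph.edgeSet_fromEdgeSet, Set.mem_sdiff,
      Finset.mem_coe]
    constructor
    · exact fun h => h.1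
    · intro h
      refine ⟨h, ?_⟩
      have := hs h
      simp only [pairs, Finset.mem_filter, Finset.mem_univ, true_and] at this
      simpa using this
  · intro G _
    have hsub : G.edgeFinset ⊆ pairs n := by
      intro e he
      simp only [pairs, Finset.mem_filter, Finset.mem_univ, true_and]
      exact G.not_isDiag_of_mem_edgeFinset he
    rw [Finset.prod_const, Finset.prod_mul_distrib, Finset.prod_const,
      Finset.card_sdiff_of_subset hsub, card_pairs]
    have : G.edgeSet.ncard = G.edgeFinset.card := by
      rw [← SimpleGraph.coe_edgeFinset, Set.ncard_coe_finset]
    rw [weight, this]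
    ring

lemma sum_weight (n : ℕ) (p : ℝ) : ∑ G : SimpleGraph (Fin n), weight n p G = 1 := by
  have := sum_weight_mul_prod n p (fun _ => 1)
  simpa using this

lemma weight_nonneg {n : ℕ} {p : ℝ} (h0 : 0 ≤ p) (h1 : p ≤ 1) (G : SimpleGraph (Fin n)) :
    0 ≤ weight n p G :=
  mul_nonneg (pow_nonneg h0 _) (pow_nonneg (by linarith) _)

lemma Pr_mono {n : ℕ} {p : ℝ} (h0 : 0 ≤ p) (h1 : p ≤ 1) {Q R : SimpleGraph (Fin n) → Prop}
    (h : ∀ G, Q G → R G) : Pr n p Q ≤ Pr n p R := by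
  classical
  unfold Pr
  refine Finset.sum_le_sum fun G _ => ?_
  have := weight_nonneg h0 h1 G
  by_cases hQ : Q G
  · simp [hQ, h G hQ]
  · by_cases hR : R G <;> simp [hQ, hR, this]

lemma Pr_compl (n : ℕ) (p : ℝ) (Q : SimpleGraph (Fin n) → Prop) :
    Pr n p Q = 1 - Pr n p (fun G => ¬ Q G) := by
  classical
  rw [eq_sub_iff_add_eq, ← sum_weight n p]
  unfold Pr
  rw [← Finset.sum_add_distrib]
  refine Finset.sum_congr rfl fun G _ => ?_
  by_cases hQ : Q G <;> simp [hQ]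

lemma Pr_or {n : ℕ} {p : ℝ} (h0 : 0 ≤ p) (h1 : p ≤ 1) (Q R : SimpleGraph (Fin n) → Prop) :
    Pr n p (fun G => Q G ∨ R G) ≤ Pr n p Q + Pr n p R := by
  classical
  unfold Pr
  rw [← Finset.sum_add_distrib]
  refine Finset.sum_le_sum fun G _ => ?_
  have := weight_nonneg h0 h1 G
  by_cases hQ : Q G <;> by_cases hR : R G <;> simp [hQ, hR, this]

lemma Pr_exists {n : ℕ} {p : ℝ} (h0 : 0 ≤ p) (h1 : p ≤ 1) {ι : Type*} (s : Finset ι)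
    (Q : ι → SimpleGraph (Fin n) → Prop) :
    Pr n p (fun G => ∃ i ∈ s, Q i G) ≤ ∑ i ∈ s, Pr n p (Q i) := by
  classical
  unfold Pr
  rw [Finset.sum_comm]
  refine Finset.sum_le_sum fun G _ => ?_
  have hw := weight_nonneg h0 h1 G
  have hnn : ∀ i ∈ s, 0 ≤ (if Q i G then weight n p G else 0) := by
    intro i _
    split_ifs <;> simp [hw]
  split_ifs with h
  · obtain ⟨i, hi, hQ⟩ := h
    calc weight n p G = (if Q i G then weight n p G else 0) := by simp [hQ]
      _ ≤ _ := Finset.single_le_sum hnn hi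
  · exact Finset.sum_nonneg hnn

open Classical in
/-- Exponential Markov inequality for a linear statistic of the edges of `G_{n,p}`. -/
lemma Pr_linear_le {n : ℕ} {p : ℝ} (h0 : 0 ≤ p) (h1 : p ≤ 1) (m : Sym2 (Fin n) → ℝ) (x : ℝ) :
    Pr n p (fun G => x ≤ ∑ e ∈ G.edgeFinset, m e)
      ≤ exp (-x + p * ∑ e ∈ pairs n, (exp (m e) - 1)) := by
  calc Pr n p (fun G => x ≤ ∑ e ∈ G.edgeFinset, m e)
      ≤ ∑ G : SimpleGraph (Fin n), exp (-x) * (weight n p G * ∏ e ∈ G.edgeFinset, exp (m e)) := by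
        unfold Pr
        refine Finset.sum_le_sum fun G _ => ?_
        have hw := weight_nonneg h0 h1 G
        rw [← Real.exp_sum, mul_left_comm, ← Real.exp_add]
        split_ifs with h
        · exact le_mul_of_one_le_right hw (Real.one_le_exp (by linarith))
        · positivity
    _ = exp (-x) * ∏ e ∈ pairs n, (p * exp (m e) + (1 - p)) := by
        rw [← Finset.mul_sum, sum_weight_mul_prod]
    _ ≤ exp (-x) * ∏ e ∈ pairs n, exp (p * (exp (m e) - 1)) := by
        refine mul_le_mul_of_nonneg_left ?_ (exp_pos _).le
        refine Finset.prod_le_prod (fun e _ => ?_) (fun e _ => ?_)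
        · have := exp_pos (m e)
          have : 0 ≤ 1 - p := by linarith
          positivity
        · have := Real.add_one_le_exp (p * (exp (m e) - 1))
          linarith
    _ = _ := by
        rw [← Real.exp_sum, ← Real.exp_add, Finset.mul_sum]

open Classical in
/-- The number of ordered pairs in `A × B` that are adjacent in `G`; an edge inside `A ∩ B`
counts twice. -/
noncomputable def eC {V : Type*} (G : SimpleGraph V) (A B : Finset V) : ℕ :=
  ((A ×ˢ B).filter (fun q => G.Adj q.1 q.2)).card

open Classical in
/-- The number of ordered pairs in `A × B` whose underlying unordered pair is `e`. -/
noncomputable def mult {n : ℕ} (A B : Finset (Fin n)) (e : Sym2 (Fin n)) : ℕ :=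
  ((A ×ˢ B).filter (fun q => s(q.1, q.2) = e)).card

lemma mult_le_two {n : ℕ} (A B : Finset (Fin n)) (e : Sym2 (Fin n)) : mult A B e ≤ 2 := by
  classical
  induction e using Sym2.ind with
  | _ x y =>
    refine (Finset.card_le_card (t := {(x, y), (y, x)}) ?_).trans Finset.card_le_two
    rintro ⟨a, b⟩ h
    rw [Finset.mem_filter] at h
    have := h.2
    rw [Sym2.eq_iff] at this
    simp only [Finset.mem_insert, Finset.mem_singleton, Prod.mk.injEq]
    exact this

open Classical in
lemma eC_eq_sum_mult {n : ℕ} (G : SimpleGraph (Fin n)) (A B : Finset (Fin n)) :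
    eC G A B = ∑ e ∈ G.edgeFinset, mult A B e := by
  unfold eC
  rw [Finset.card_eq_sum_card_fiberwise (f := fun q => s(q.1, q.2)) (t := G.edgeFinset)]
  · refine Finset.sum_congr rfl fun e he => ?_
    unfold mult
    rw [Finset.filter_filter]
    congr 1
    refine Finset.filter_congr fun q _ => ?_
    constructor
    · exact fun h => h.2
    · intro h
      refine ⟨?_, h⟩
      rw [← h, SimpleGraph.mem_edgeFinset, SimpleGraph.mem_edgeSet] at he
      exact he
  · intro q hq
    have := (Finset.mem_filter.1 hq).2
    simpa using this

open Classical in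
lemma sum_mult_pairs {n : ℕ} (A B : Finset (Fin n)) :
    ∑ e ∈ pairs n, mult A B e = ((A ×ˢ B).filter (fun q => q.1 ≠ q.2)).card := by
  rw [Finset.card_eq_sum_card_fiberwise (f := fun q => s(q.1, q.2)) (t := pairs n)]
  · refine Finset.sum_congr rfl fun e he => ?_
    unfold mult
    rw [Finset.filter_filter]
    congr 1
    refine Finset.filter_congr fun q _ => ?_
    constructor
    · intro h
      refine ⟨?_, h⟩
      simp only [pairs, Finset.mem_filter, Finset.mem_univ, true_and] at he
      rw [← h] at he
      simpa using he
    · exact fun h => h.2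
  · intro q hq
    have := (Finset.mem_filter.1 hq).2
    simpa [pairs] using this

lemma exp_mul_sub_one_le (l : ℝ) (hl : |l| ≤ 1 / 2) (m : ℕ) (hm : m ≤ 2) :
    exp (l * m) - 1 ≤ m * (l + 2 * l ^ 2) := by
  have h2 : exp (2 * l) - 1 ≤ 2 * (l + 2 * l ^ 2) := by
    have h := Real.abs_exp_sub_one_sub_id_le (x := 2 * l)
      (by rw [abs_mul, abs_of_pos (two_pos : (0:ℝ) < 2)]; linarith)
    have := (abs_le.1 h).2
    nlinarith
  have hsq : exp (2 * l) = exp l ^ 2 := by rw [← Real.exp_nat_mul]; norm_num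
  interval_cases m
  · simp
  · simp only [Nat.cast_one, mul_one, one_mul]
    nlinarith [sq_nonneg (exp l - 1)]
  · push_cast
    rw [mul_comm l 2]
    exact h2

open Classical in
/-- Chernoff bound for `e(A,B)` in `G_{n,p}`: positive `l` gives the upper tail, negative `l` the
lower tail. -/
lemma Pr_eC_le {n : ℕ} {p : ℝ} (h0 : 0 ≤ p) (h1 : p ≤ 1) (A B : Finset (Fin n)) (l x : ℝ)
    (hl : |l| ≤ 1 / 2) :
    Pr n p (fun G => x ≤ l * eC G A B)
      ≤ exp (-x + p * (((A ×ˢ B).filter (fun q => q.1 ≠ q.2)).card * (l + 2 * l ^ 2))) := by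
  have key := Pr_linear_le h0 h1 (fun e => l * (mult A B e : ℝ)) x
  have hfun : (fun G : SimpleGraph (Fin n) => x ≤ l * eC G A B)
      = fun G => x ≤ ∑ e ∈ G.edgeFinset, l * (mult A B e : ℝ) := by
    funext G
    rw [eC_eq_sum_mult, ← Finset.mul_sum]
    push_cast
    rfl
  rw [hfun]
  refine key.trans (Real.exp_le_exp.2 ?_)
  have : ∑ e ∈ pairs n, (exp (l * (mult A B e : ℝ)) - 1)
      ≤ ((A ×ˢ B).filter (fun q => q.1 ≠ q.2)).card * (l + 2 * l ^ 2) := by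
    rw [← sum_mult_pairs]
    push_cast
    rw [Finset.sum_mul]
    exact Finset.sum_le_sum fun e _ => exp_mul_sub_one_le l hl _ (mult_le_two A B e)
  nlinarith [mul_le_mul_of_nonneg_left this h0]

lemma Pr_eC_upper {n : ℕ} {p : ℝ} (h0 : 0 ≤ p) (h1 : p ≤ 1) (A B : Finset (Fin n)) (l x : ℝ)
    (hl0 : 0 < l) (hl : l ≤ 1 / 2) :
    Pr n p (fun G => x ≤ eC G A B)
      ≤ exp (-(l * x) + p * (A.card * B.card * (l + 2 * l ^ 2))) := by
  classical
  have key := Pr_eC_le h0 h1 A B l (l * x) (by rwa [abs_of_pos hl0])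
  have hmono : Pr n p (fun G => x ≤ eC G A B) ≤ Pr n p (fun G => l * x ≤ l * eC G A B) :=
    Pr_mono h0 h1 fun G h => mul_le_mul_of_nonneg_left h hl0.le
  refine (hmono.trans key).trans (Real.exp_le_exp.2 ?_)
  have hc : (((A ×ˢ B).filter (fun q => q.1 ≠ q.2)).card : ℝ) ≤ A.card * B.card := by
    rw [← Nat.cast_mul, ← Finset.card_product]
    exact_mod_cast Finset.card_filter_le _ _
  gcongr

/-! ### Pseudorandomness -/

/-- Lower tail with parameter `-δ/4` at every vertex and a union bound over the `n` vertices. -/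
lemma Pr_deg_le {n : ℕ} {p δ : ℝ} (h0 : 0 ≤ p) (h1 : p ≤ 1) (hδ : 0 < δ) (hδ1 : δ ≤ 1)
    (hn : 1 ≤ n) (hnp : 16 / δ ^ 2 * log n ≤ n * p) :
    Pr n p (fun G => ∃ v, (eC G {v} Finset.univ : ℝ) < (1 - δ) * (n * p)) ≤ 3 / n := by
  classical
  have hn' : (1 : ℝ) ≤ n := by exact_mod_cast hn
  have hterm : ∀ v : Fin n,
      Pr n p (fun G => (eC G {v} Finset.univ : ℝ) < (1 - δ) * (n * p)) ≤ 3 / (n : ℝ) ^ 2 := by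
    intro v
    have key := Pr_eC_le h0 h1 {v} Finset.univ (-(δ / 4)) (-(δ / 4) * ((1 - δ) * (n * p)))
      (by rw [abs_neg, abs_of_pos (by positivity)]; linarith)
    have hcard : ((({v} : Finset (Fin n)) ×ˢ (Finset.univ : Finset (Fin n))).filter
        (fun q => q.1 ≠ q.2)).card = n - 1 := by
      have : ((({v} : Finset (Fin n)) ×ˢ (Finset.univ : Finset (Fin n))).filter
        (fun q => q.1 ≠ q.2)) = {v} ×ˢ (Finset.univ.erase v) := by
        ext ⟨a, b⟩
        simp only [Finset.mem_filter, Finset.mem_product, Finset.mem_singleton, Finset.mem_univ,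
          and_true, Finset.mem_erase]
        constructor
        · rintro ⟨rfl, h⟩; exact ⟨rfl, Ne.symm h⟩
        · rintro ⟨rfl, h⟩; exact ⟨rfl, Ne.symm h⟩
      rw [this, Finset.card_product, Finset.card_singleton,
        Finset.card_erase_of_mem (Finset.mem_univ v), Finset.card_univ, Fintype.card_fin, one_mul]
    rw [hcard] at key
    have hmono : Pr n p (fun G => (eC G {v} Finset.univ : ℝ) < (1 - δ) * (n * p))
        ≤ Pr n p (fun G => -(δ / 4) * ((1 - δ) * (n * p)) ≤ -(δ / 4) * eC G {v} Finset.univ) :=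
      Pr_mono h0 h1 fun G h => by nlinarith
    refine (hmono.trans key).trans ?_
    push_cast [hn]
    have hlog : 2 * log n ≤ δ ^ 2 / 8 * (n * p) := by
      have := mul_le_mul_of_nonneg_left hnp (show 0 ≤ δ ^ 2 / 8 by positivity)
      have e : δ ^ 2 / 8 * (16 / δ ^ 2 * log n) = 2 * log n := by field_simp; ring
      linarith
    have hexp : -(-(δ / 4) * ((1 - δ) * (n * p)))
        + p * ((n - 1) * (-(δ / 4) + 2 * (-(δ / 4)) ^ 2)) ≤ 1 + -(2 * log n) := by
      have h3 : p * δ ≤ 1 := by nlinarith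
      have h4 : 0 ≤ p * δ ^ 2 := by positivity
      nlinarith
    calc _ ≤ exp (1 + -(2 * log n)) := Real.exp_le_exp.2 hexp
      _ = exp 1 * ((n : ℝ) ^ 2)⁻¹ := by
        rw [Real.exp_add, Real.exp_neg]
        congr 2
        rw [mul_comm, Real.exp_mul, Real.exp_log (by linarith)]
        norm_num
      _ ≤ 3 * ((n : ℝ) ^ 2)⁻¹ := by
        gcongr
        exact Real.exp_one_lt_three.le
      _ = _ := by rw [div_eq_mul_inv]
  have hU := Pr_exists h0 h1 (Finset.univ : Finset (Fin n))
    (fun v G => (eC G {v} Finset.univ : ℝ) < (1 - δ) * (n * p))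
  simp only [Finset.mem_univ, true_and] at hU
  refine hU.trans ((Finset.sum_le_sum fun v _ => hterm v).trans ?_)
  rw [Finset.sum_const, Finset.card_univ, Fintype.card_fin, nsmul_eq_mul]
  apply le_of_eq
  field_simp

/-- Upper tail with parameter `1/2`. The failure probability for fixed `A`, `B` is at most
`n ^ (-2 (|A| + |B|))`, so the union bound over all pairs with `A ≠ ∅` is
`((1 + n⁻²) ^ n - 1) (1 + n⁻²) ^ n`. -/
lemma Pr_small_le {n : ℕ} {p ε : ℝ} (h0 : 0 ≤ p) (h1 : p ≤ 1) (hε : 0 < ε)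
    (hn : 1 ≤ n) (hnp : 96 / ε * log n ≤ n * p) :
    Pr n p (fun G => ∃ A B : Finset (Fin n), A.Nonempty ∧ (A.card : ℝ) ≤ ε / 40 * n ∧
      B.card ≤ 5 * A.card ∧ ε / 2 * (n * p) * A.card ≤ eC G A B) ≤ 9 / n := by
  classical
  have hn' : (1 : ℝ) ≤ n := by exact_mod_cast hn
  have hlog : 0 ≤ log n := Real.log_nonneg hn'
  have hlog2 : 12 * log n ≤ ε / 8 * (n * p) := by
    have := mul_le_mul_of_nonneg_left hnp (show 0 ≤ ε / 8 by positivity)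
    have e : ε / 8 * (96 / ε * log n) = 12 * log n := by field_simp; ring
    linarith
  set x : ℝ := ((n : ℝ) ^ 2)⁻¹ with hx
  have hxe : x = exp (-(2 * log n)) := by
    rw [hx, Real.exp_neg, mul_comm, Real.exp_mul, Real.exp_log (by linarith)]
    norm_num
  have hx0 : 0 ≤ x := by positivity
  have hterm : ∀ A B : Finset (Fin n), A.Nonempty →
      Pr n p (fun G => (A.card : ℝ) ≤ ε / 40 * n ∧
        B.card ≤ 5 * A.card ∧ ε / 2 * (n * p) * A.card ≤ eC G A B) ≤ x ^ A.card * x ^ B.card := by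
    intro A B hA
    by_cases hc : (A.card : ℝ) ≤ ε / 40 * n ∧ B.card ≤ 5 * A.card
    · obtain ⟨hc1, hc2⟩ := hc
      have hc2' : (B.card : ℝ) ≤ 5 * A.card := by exact_mod_cast hc2
      have hmono : Pr n p (fun G => (A.card : ℝ) ≤ ε / 40 * n ∧
          B.card ≤ 5 * A.card ∧ ε / 2 * (n * p) * A.card ≤ eC G A B)
          ≤ Pr n p (fun G => ε / 2 * (n * p) * A.card ≤ eC G A B) :=
        Pr_mono h0 h1 fun G h => h.2.2
      refine (hmono.trans (Pr_eC_upper h0 h1 A B (1 / 2) _ (by norm_num) le_rfl)).trans ?_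
      rw [hxe, ← Real.exp_nat_mul, ← Real.exp_nat_mul, ← Real.exp_add]
      apply Real.exp_le_exp.2
      have hA0 : (0 : ℝ) ≤ A.card := by positivity
      have hB0 : (0 : ℝ) ≤ B.card := by positivity
      have e1 : p * (A.card * B.card) ≤ p * (A.card * (5 * (ε / 40 * n))) := by
        gcongr
        linarith
      have e2 := mul_le_mul_of_nonneg_right hlog2 hA0
      have e3 : log n * B.card ≤ log n * (5 * A.card) := by gcongr
      nlinarith
    · have hz : Pr n p (fun G => (A.card : ℝ) ≤ ε / 40 * n ∧
          B.card ≤ 5 * A.card ∧ ε / 2 * (n * p) * A.card ≤ eC G A B) = 0 := by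
        unfold Pr
        refine Finset.sum_eq_zero fun G _ => if_neg ?_
        exact fun h => hc ⟨h.1, h.2.1⟩
      rw [hz]
      positivity
  have hU := Pr_exists h0 h1
    ((Finset.univ.filter (fun A : Finset (Fin n) => A.Nonempty)) ×ˢ
      (Finset.univ : Finset (Finset (Fin n))))
    (fun q G => (q.1.card : ℝ) ≤ ε / 40 * n ∧
        q.2.card ≤ 5 * q.1.card ∧ ε / 2 * (n * p) * q.1.card ≤ eC G q.1 q.2)
  have hsub : Pr n p (fun G => ∃ A B : Finset (Fin n), A.Nonempty ∧ (A.card : ℝ) ≤ ε / 40 * n ∧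
      B.card ≤ 5 * A.card ∧ ε / 2 * (n * p) * A.card ≤ eC G A B) ≤ _ :=
    (Pr_mono h0 h1 (by
      rintro G ⟨A, B, hA, h⟩
      exact ⟨(A, B), by simpa using hA, h⟩)).trans hU
  refine hsub.trans ?_
  have hsum : ∀ y : ℝ, ∑ A : Finset (Fin n), y ^ A.card = (y + 1) ^ n := by
    intro y
    have := Fintype.sum_pow_mul_eq_add_pow (Fin n) y 1
    simpa using this
  have hsum' : ∑ A ∈ Finset.univ.filter (fun A : Finset (Fin n) => A.Nonempty), x ^ A.card
      = (x + 1) ^ n - 1 := by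
    rw [← hsum x, ← Finset.sum_filter_add_sum_filter_not Finset.univ
      (fun A : Finset (Fin n) => A.Nonempty)]
    have : Finset.univ.filter (fun A : Finset (Fin n) => ¬ A.Nonempty) = {∅} := by
      ext A; simp
    rw [this]; simp
  have hpow : (x + 1) ^ n ≤ exp (1 / n) := by
    calc (x + 1) ^ n ≤ (exp x) ^ n := by
          gcongr; exact Real.add_one_le_exp x
      _ = exp (n * x) := by rw [Real.exp_nat_mul]
      _ = exp (1 / n) := by congr 1; rw [hx]; field_simp
  have hinv : 1 / (n : ℝ) ≤ 1 := by rw [div_le_one (by linarith)]; exact hn'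
  have hinv0 : 0 ≤ 1 / (n : ℝ) := by positivity
  have he : exp (1 / n) - 1 ≤ 2 * (1 / n) := by
    have h := Real.abs_exp_sub_one_sub_id_le (x := 1 / (n : ℝ)) (by rwa [abs_of_nonneg hinv0])
    have := (abs_le.1 h).2
    nlinarith
  have he3 : exp (1 / n) ≤ 3 := by linarith
  calc _ ≤ ∑ q ∈ (Finset.univ.filter (fun A : Finset (Fin n) => A.Nonempty)) ×ˢ
      (Finset.univ : Finset (Finset (Fin n))), x ^ q.1.card * x ^ q.2.card := by
        refine Finset.sum_le_sum fun q hq => hterm q.1 q.2 ?_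
        simpa using hq
    _ = ((x + 1) ^ n - 1) * (x + 1) ^ n := by
        rw [Finset.sum_product, ← hsum', ← hsum x, Finset.sum_mul_sum]
    _ ≤ (2 * (1 / n)) * 3 := by
        have : 1 ≤ (x + 1) ^ n := one_le_pow₀ (by linarith)
        apply mul_le_mul <;> linarith
    _ ≤ 9 / n := by
        have : (9 : ℝ) / n = 9 * (1 / n) := by ring
        rw [this]; linarith

/-- Upper tail with parameter `δ/4`. Each failure probability is at most `exp (-3n)`, which beats
the `4 ^ n` choices of `A` and `B`. -/
lemma Pr_large_le {n L : ℕ} {p δ : ℝ} (h0 : 0 ≤ p) (h1 : p ≤ 1) (hδ : 0 < δ) (hδ1 : δ ≤ 1)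
    (hn : 1 ≤ n) (hpL : 24 / δ ^ 2 ≤ p * L) :
    Pr n p (fun G => ∃ A B : Finset (Fin n), B.card ≤ L ∧
      p * A.card * B.card + δ * p * n * L ≤ eC G A B) ≤ 1 / n := by
  classical
  have hn' : (1 : ℝ) ≤ n := by exact_mod_cast hn
  have hpL2 : 3 * (n : ℝ) ≤ δ ^ 2 / 8 * (p * n * L) := by
    have := mul_le_mul_of_nonneg_left hpL (show 0 ≤ δ ^ 2 / 8 * n by positivity)
    have e : δ ^ 2 / 8 * n * (24 / δ ^ 2) = 3 * n := by field_simp; norm_num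
    nlinarith
  have hterm : ∀ A B : Finset (Fin n),
      Pr n p (fun G => B.card ≤ L ∧ p * A.card * B.card + δ * p * n * L ≤ eC G A B)
        ≤ exp (-(3 * n)) := by
    intro A B
    by_cases hc : B.card ≤ L
    · have hc' : (B.card : ℝ) ≤ L := by exact_mod_cast hc
      have hA : (A.card : ℝ) ≤ n := by
        have := Finset.card_le_univ A
        rw [Fintype.card_fin] at this
        exact_mod_cast this
      have hmono : Pr n p (fun G => B.card ≤ L ∧
          p * A.card * B.card + δ * p * n * L ≤ eC G A B)
          ≤ Pr n p (fun G => p * A.card * B.card + δ * p * n * L ≤ eC G A B) :=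
        Pr_mono h0 h1 fun G h => h.2
      refine (hmono.trans (Pr_eC_upper h0 h1 A B (δ / 4) _ (by linarith) (by linarith))).trans ?_
      apply Real.exp_le_exp.2
      have e1 : δ ^ 2 / 8 * (p * (A.card * B.card)) ≤ δ ^ 2 / 8 * (p * (n * L)) := by gcongr
      nlinarith
    · have hz : Pr n p (fun G => B.card ≤ L ∧
          p * A.card * B.card + δ * p * n * L ≤ eC G A B) = 0 := by
        unfold Pr
        refine Finset.sum_eq_zero fun G _ => if_neg ?_
        exact fun h => hc h.1
      rw [hz]
      positivity
  have hU := Pr_exists h0 h1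
    ((Finset.univ : Finset (Finset (Fin n))) ×ˢ (Finset.univ : Finset (Finset (Fin n))))
    (fun q G => q.2.card ≤ L ∧ p * q.1.card * q.2.card + δ * p * n * L ≤ eC G q.1 q.2)
  have hsub : Pr n p (fun G => ∃ A B : Finset (Fin n), B.card ≤ L ∧
      p * A.card * B.card + δ * p * n * L ≤ eC G A B) ≤ _ :=
    (Pr_mono h0 h1 (by
      rintro G ⟨A, B, h⟩
      exact ⟨(A, B), by simp, h⟩)).trans hU
  refine hsub.trans ((Finset.sum_le_sum fun q _ => hterm q.1 q.2).trans ?_)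
  rw [Finset.sum_const, Finset.card_product, Finset.card_univ, Fintype.card_finset,
    Fintype.card_fin, nsmul_eq_mul]
  push_cast
  have h2 : (2 : ℝ) ≤ exp 1 := by linarith [Real.add_one_le_exp (1 : ℝ)]
  have h2n : (2 : ℝ) ^ n ≤ exp n := by
    calc (2 : ℝ) ^ n ≤ exp 1 ^ n := by gcongr
      _ = exp n := by rw [← Real.exp_nat_mul, mul_one]
  calc (2 : ℝ) ^ n * 2 ^ n * exp (-(3 * n)) ≤ exp n * exp n * exp (-(3 * n)) := by gcongr
    _ = (exp n)⁻¹ := by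
        rw [← Real.exp_add, ← Real.exp_add, ← Real.exp_neg]
        congr 1; ring
    _ ≤ (n : ℝ)⁻¹ := by
        gcongr
        linarith [Real.add_one_le_exp (n : ℝ)]
    _ = 1 / n := by rw [one_div]

/-- The pseudorandom properties of `G_{n,p}` used by the rotation argument: all degrees are nearly
at least `np`, small sets `A` send few edges to sets of size at most `5|A|`, and no set `B` of size
at most `L` receives many more edges from a set `A` than expected. -/
structure PseudoRandom (n L : ℕ) (p ε δ : ℝ) (G : SimpleGraph (Fin n)) : Prop where
  degree : ∀ v, (1 - δ) * (n * p) ≤ eC G {v} Finset.univ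
  small : ∀ A B : Finset (Fin n), A.Nonempty → (A.card : ℝ) ≤ ε / 40 * n →
    B.card ≤ 5 * A.card → (eC G A B : ℝ) < ε / 2 * (n * p) * A.card
  large : ∀ A B : Finset (Fin n), B.card ≤ L →
    (eC G A B : ℝ) ≤ p * A.card * B.card + δ * p * n * L

lemma Pr_pseudoRandom {n L : ℕ} {p ε δ : ℝ} (h0 : 0 ≤ p) (h1 : p ≤ 1) (hε : 0 < ε)
    (hδ : 0 < δ) (hδ1 : δ ≤ 1) (hn : 1 ≤ n) (hnp : 16 / δ ^ 2 * log n ≤ n * p)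
    (hnp' : 96 / ε * log n ≤ n * p) (hpL : 24 / δ ^ 2 ≤ p * L) :
    1 - 13 / n ≤ Pr n p (PseudoRandom n L p ε δ) := by
  rw [Pr_compl]
  have hle : Pr n p (fun G => ¬ PseudoRandom n L p ε δ G) ≤ 3 / n + (9 / n + 1 / n) := by
    refine (Pr_mono h0 h1 ?_).trans ((Pr_or h0 h1 _ _).trans
      (add_le_add (Pr_deg_le h0 h1 hδ hδ1 hn hnp) ((Pr_or h0 h1 _ _).trans
        (add_le_add (Pr_small_le h0 h1 hε hn hnp') (Pr_large_le h0 h1 hδ hδ1 hn hpL)))))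
    intro G hG
    by_contra hcon
    push Not at hcon
    obtain ⟨hd, hs, hl⟩ := hcon
    exact hG ⟨hd, hs, fun A B h => (hl A B h).le⟩
  have : (13 : ℝ) / n = 3 / n + (9 / n + 1 / n) := by ring
  linarith

/-! ### Consecutive entries of lists -/

section Lists

lemma pair_infix_iff {l : List V} {x y : V} :
    [x, y] <:+: l ↔ ∃ i : ℕ, l[i]? = some x ∧ l[i + 1]? = some y := by
  constructor
  · rintro ⟨s, t, rfl⟩
    exact ⟨s.length, by simp, by simp⟩
  · rintro ⟨i, hx, hy⟩
    refine ⟨l.take i, l.drop (i + 2), ?_⟩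
    obtain ⟨hi, rfl⟩ := List.getElem?_eq_some_iff.1 hx
    obtain ⟨hi', rfl⟩ := List.getElem?_eq_some_iff.1 hy
    have h1 : l.drop i = l[i] :: l[i + 1] :: l.drop (i + 2) := by
      rw [List.drop_eq_getElem_cons hi, List.drop_eq_getElem_cons hi']
    calc _ = l.take i ++ l.drop i := by rw [h1]; simp
      _ = l := List.take_append_drop i l

lemma getElem?_inj' {l : List V} (hl : l.Nodup) {i j : ℕ} {x : V} (hi : l[i]? = some x)
    (hj : l[j]? = some x) : i = j := by
  obtain ⟨hi', h⟩ := List.getElem?_eq_some_iff.1 hi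
  obtain ⟨hj', h'⟩ := List.getElem?_eq_some_iff.1 hj
  exact (hl.getElem_inj_iff).1 (h.trans h'.symm)

lemma pair_infix_left_unique {l : List V} (hl : l.Nodup) {x x' y : V} (h : [x, y] <:+: l)
    (h' : [x', y] <:+: l) : x = x' := by
  obtain ⟨i, hx, hy⟩ := pair_infix_iff.1 h
  obtain ⟨j, hx', hy'⟩ := pair_infix_iff.1 h'
  have : i + 1 = j + 1 := getElem?_inj' hl hy hy'
  have : i = j := by omega
  subst this
  simpa [hx] using hx'

lemma pair_infix_right_unique {l : List V} (hl : l.Nodup) {x y y' : V} (h : [x, y] <:+: l)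
    (h' : [x, y'] <:+: l) : y = y' := by
  obtain ⟨i, hx, hy⟩ := pair_infix_iff.1 h
  obtain ⟨j, hx', hy'⟩ := pair_infix_iff.1 h'
  have : i = j := getElem?_inj' hl hx hx'
  subst this
  simpa [hy] using hy'

lemma pair_infix_asymm {l : List V} (hl : l.Nodup) {x y : V} (h : [x, y] <:+: l) :
    ¬ [y, x] <:+: l := by
  intro h'
  obtain ⟨i, hx, hy⟩ := pair_infix_iff.1 h
  obtain ⟨j, hy', hx'⟩ := pair_infix_iff.1 h'
  have := getElem?_inj' hl hx hx'
  have := getElem?_inj' hl hy hy'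
  omega

lemma exists_pred {l : List V} {v : V} (hv : v ∈ l) (hh : l.head? ≠ some v) :
    ∃ c, [c, v] <:+: l := by
  obtain ⟨s, t, rfl⟩ := List.append_of_mem hv
  rcases List.eq_nil_or_concat s with rfl | ⟨s', c, rfl⟩
  · simp at hh
  · exact ⟨c, s', t, by simp⟩

lemma exists_succ {l : List V} {v : V} (hv : v ∈ l) (hh : l.getLast? ≠ some v) :
    ∃ c, [v, c] <:+: l := by
  obtain ⟨s, t, rfl⟩ := List.append_of_mem hv
  rcases t with _ | ⟨c, t⟩
  · simp at hh
  · exact ⟨c, s, t, by simp⟩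

lemma getLast?_ne_of_pair {l : List V} (hl : l.Nodup) {v u : V} (h : [v, u] <:+: l) :
    l.getLast? ≠ some v := by
  intro hv
  obtain ⟨i, hx, hy⟩ := pair_infix_iff.1 h
  rw [List.getLast?_eq_getElem?] at hv
  have h1 := getElem?_inj' hl hx hv
  obtain ⟨hi', -⟩ := List.getElem?_eq_some_iff.1 hy
  omega

/-- A sublist of consecutive entries of `pre ++ b :: suf` either lies in one of the two parts or
uses the junction between the last entry of `pre` and `b`. -/
lemma infix_append_cases {w pre suf : List V} {b : V} (h : w <:+: pre ++ b :: suf) :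
    w <:+: pre ∨ w <:+: b :: suf ∨
      ∃ s c t, w = s ++ c :: b :: t ∧ pre.getLast? = some c := by
  rcases List.infix_append_iff.1 h with h | h | ⟨t₁, t₂, rfl, h₁, h₂⟩
  · exact Or.inl h
  · exact Or.inr (Or.inl h)
  · rcases List.eq_nil_or_concat t₁ with rfl | ⟨s, c, rfl⟩
    · exact Or.inr (Or.inl (by simpa using h₂.isInfix))
    · rcases t₂ with _ | ⟨b', t⟩
      · exact Or.inl (by simpa using h₁.isInfix)
      · obtain ⟨rfl, -⟩ := List.cons_prefix_cons.1 h₂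
        refine Or.inr (Or.inr ⟨s, c, t, by simp, ?_⟩)
        obtain ⟨r, rfl⟩ := h₁
        simp

/-- Any repetition-free list splits into few consecutive segments of length at most `L`. -/
lemma exists_segments [DecidableEq V] (L : ℕ) (hL : 0 < L) (P : List V) (hP : P.Nodup) :
    ∃ W : Finset (List V), (∀ w ∈ W, w <:+: P ∧ w.length ≤ L) ∧ (∀ x ∈ P, ∃ w ∈ W, x ∈ w) ∧
      (∀ w ∈ W, ∀ w' ∈ W, ∀ x, x ∈ w → x ∈ w' → w = w') ∧ W.card * L ≤ P.length + L := by
  induction hlen : P.length using Nat.strong_induction_on generalizing P with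
  | _ k ih =>
    by_cases hk : k ≤ L
    · refine ⟨{P}, ?_, ?_, ?_, ?_⟩
      · simp [hlen, hk]
      · intro x hx; exact ⟨P, by simp, hx⟩
      · intro w hw w' hw' _ _ _
        rw [Finset.mem_singleton] at hw hw'
        rw [hw, hw']
      · simp
    · push Not at hk
      have hsplit := List.take_append_drop L P
      have hnd : (P.take L ++ P.drop L).Nodup := by rwa [hsplit]
      obtain ⟨h1, h2, h3⟩ := List.nodup_append.1 hnd
      obtain ⟨W, hW1, hW2, hW3, hW4⟩ := ih (k - L) (by omega) (P.drop L) h2 (by simp [hlen])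
      refine ⟨insert (P.take L) W, ?_, ?_, ?_, ?_⟩
      · intro w hw
        rcases Finset.mem_insert.1 hw with rfl | hw
        · exact ⟨(List.take_prefix L P).isInfix, by simp⟩
        · exact ⟨(hW1 w hw).1.trans (List.drop_suffix L P).isInfix, (hW1 w hw).2⟩
      · intro x hx
        rw [← hsplit] at hx
        rcases List.mem_append.1 hx with hx | hx
        · exact ⟨_, Finset.mem_insert_self _ _, hx⟩
        · obtain ⟨w, hw, hxw⟩ := hW2 x hx
          exact ⟨w, Finset.mem_insert_of_mem hw, hxw⟩
      · intro w hw w' hw' x hx hx'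
        rcases Finset.mem_insert.1 hw with rfl | hw <;> rcases Finset.mem_insert.1 hw' with rfl | hw'
        · rfl
        · exact absurd rfl (h3 x hx x ((hW1 w' hw').1.subset hx'))
        · exact absurd rfl (h3 x hx' x ((hW1 w hw).1.subset hx))
        · exact hW3 w hw w' hw' x hx hx'
      · have := Finset.card_insert_le (P.take L) W
        calc _ ≤ (W.card + 1) * L := Nat.mul_le_mul_right L this
          _ = W.card * L + L := by ring
          _ ≤ k + L := by omega

end Lists

/-! ### Rotations -/

section Rotations

/-- `l'` arises from the path `l` by a rotation in `G` keeping the last vertex fixed: the first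
vertex is joined to `b` and the edge of `l` entering `b` is removed. -/
def Rot (G : SimpleGraph V) (l l' : List V) : Prop :=
  ∃ (a b : V) (pre suf : List V), l = pre ++ b :: suf ∧ pre.head? = some a ∧ G.Adj a b ∧
    l' = pre.reverse ++ b :: suf

/-- The paths obtained from `P` by at most `t` rotations. The edge removed by a rotation need not
belong to `P`. -/
def reach (G : SimpleGraph V) (P : List V) : ℕ → Set (List V)
  | 0 => {P}
  | t + 1 => reach G P t ∪ {l' | ∃ l ∈ reach G P t, Rot G l l'}

lemma rot_path {G Γ : SimpleGraph V} (hG : G ≤ Γ) {l l' : List V} (hl : IsPathOn Γ l)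
    (h : Rot G l l') : IsPathOn Γ l' ∧ l'.Perm l ∧ l'.getLast? = l.getLast? := by
  obtain ⟨a, b, pre, suf, rfl, ha, hab, rfl⟩ := h
  obtain ⟨-, hnd, hch⟩ := hl
  have hperm : (pre.reverse ++ b :: suf).Perm (pre ++ b :: suf) :=
    (List.reverse_perm pre).append_right _
  refine ⟨⟨by simp, hperm.nodup_iff.2 hnd, ?_⟩, hperm,
    by simp [List.getLast?_append, List.getLast?_cons]⟩
  have hch : List.IsChain Γ.Adj (pre ++ b :: suf) := hch
  obtain ⟨h1, h2, -⟩ := List.isChain_append.1 hch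
  refine List.isChain_append.2 ⟨?_, h2, ?_⟩
  · rw [List.isChain_reverse]
    exact h1.imp fun _ _ h => h.symm
  · intro x hx y hy
    rw [List.getLast?_reverse, ha] at hx
    simp only [Option.mem_some, List.head?_cons] at hx hy
    subst hx; subst hy
    exact hG hab

lemma reach_path {G Γ : SimpleGraph V} (hG : G ≤ Γ) {P : List V} (hP : IsPathOn Γ P) {t : ℕ} :
    ∀ l ∈ reach G P t, IsPathOn Γ l ∧ l.Perm P ∧ l.getLast? = P.getLast? := by
  induction t with
  | zero => rintro l rfl; exact ⟨hP, List.Perm.refl _, rfl⟩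
  | succ t ih =>
    rintro l (hl | ⟨l₀, hl₀, hr⟩)
    · exact ih l hl
    · obtain ⟨h1, h2, h3⟩ := ih l₀ hl₀
      obtain ⟨h1', h2', h3'⟩ := rot_path hG h1 hr
      exact ⟨h1', h2'.trans h2, h3'.trans h3⟩

open Classical in
/-- Each rotation spoils, i.e. cuts through, at most one of a family of disjoint segments
of `P`. -/
lemma card_bad_le {G : SimpleGraph V} {P : List V} {W : Finset (List V)}
    (hW : ∀ w ∈ W, w <:+: P) (hdisj : ∀ w ∈ W, ∀ w' ∈ W, ∀ x, x ∈ w → x ∈ w' → w = w') {t : ℕ} :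
    ∀ l ∈ reach G P t, (W.filter fun w => ¬ w <:+: l ∧ ¬ w.reverse <:+: l).card ≤ t := by
  induction t with
  | zero =>
    rintro l rfl
    simp only [nonpos_iff_eq_zero, Finset.card_eq_zero, Finset.filter_eq_empty_iff]
    exact fun w hw h => h.1 (hW w hw)
  | succ t ih =>
    rintro l (hl | ⟨l₀, hl₀, a, b, pre, suf, rfl, ha, hab, rfl⟩)
    · exact (ih l hl).trans (Nat.le_succ t)
    · have hsub : (W.filter fun w => ¬ w <:+: pre.reverse ++ b :: suf ∧
          ¬ w.reverse <:+: pre.reverse ++ b :: suf) ⊆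
          (W.filter fun w => ¬ w <:+: pre ++ b :: suf ∧ ¬ w.reverse <:+: pre ++ b :: suf) ∪
          W.filter (fun w => b ∈ w) := by
        intro w hw
        rw [Finset.mem_filter] at hw
        obtain ⟨hwW, hw1, hw2⟩ := hw
        rw [Finset.mem_union, Finset.mem_filter, Finset.mem_filter]
        by_cases hb : b ∈ w
        · exact Or.inr ⟨hwW, hb⟩
        · refine Or.inl ⟨hwW, ?_, ?_⟩
          · intro h
            rcases infix_append_cases h with h | h | ⟨s, c, u, rfl, -⟩
            · exact hw2 (((List.reverse_infix).2 h).trans (List.prefix_append _ _).isInfix)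
            · exact hw1 (h.trans (List.suffix_append _ _).isInfix)
            · simp at hb
          · intro h
            rcases infix_append_cases h with h | h | ⟨s, c, u, hw, -⟩
            · refine hw1 (List.IsInfix.trans ?_ (List.prefix_append _ _).isInfix)
              rw [← List.reverse_infix, List.reverse_reverse]
              exact h
            · exact hw2 (h.trans (List.suffix_append _ _).isInfix)
            · rw [← List.mem_reverse, hw] at hb
              simp at hb
      have hone : (W.filter (fun w => b ∈ w)).card ≤ 1 := by
        rw [Finset.card_le_one]
        intro w hw w' hw'
        rw [Finset.mem_filter] at hw hw'
        exact hdisj w hw.1 w' hw'.1 b hw.2 hw'.2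
      calc _ ≤ _ := Finset.card_le_card hsub
        _ ≤ _ := Finset.card_union_le _ _
        _ ≤ t + 1 := add_le_add (ih _ hl₀) hone

/-- All neighbours of an endpoint of a longest path lie on the path. -/
lemma adj_mem_of_longest {G Γ : SimpleGraph V} (hG : G ≤ Γ) {P : List V}
    (hP : IsLongestPathOn Γ P) {t : ℕ} {l : List V} (hl : l ∈ reach G P t) {a v : V}
    (ha : l.head? = some a) (hav : G.Adj a v) : v ∈ l := by
  by_contra hv
  obtain ⟨⟨-, hnd, hch⟩, hperm, -⟩ := reach_path hG hP.1 l hl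
  have hch : List.IsChain Γ.Adj l := hch
  have hpath : IsPathOn Γ (v :: l) := by
    refine ⟨by simp, List.nodup_cons.2 ⟨hv, hnd⟩, ?_⟩
    change List.IsChain Γ.Adj (v :: l)
    rw [List.isChain_cons]
    refine ⟨?_, hch⟩
    intro y hy
    rw [ha] at hy
    simp only [Option.mem_some] at hy
    subst hy
    exact hG hav.symm
  have := hP.2 _ hpath
  rw [List.length_cons, hperm.length_eq] at this
  omega

variable [Fintype V]

open Classical in
/-- The first vertices of the paths obtained from `P` by at most `t` rotations. -/
noncomputable def ends (G : SimpleGraph V) (P : List V) (t : ℕ) : Finset V :=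
  Finset.univ.filter fun x => ∃ l ∈ reach G P t, l.head? = some x

lemma mem_ends {G : SimpleGraph V} {P : List V} {t : ℕ} {x : V} :
    x ∈ ends G P t ↔ ∃ l ∈ reach G P t, l.head? = some x := by
  simp [ends]

lemma ends_succ (G : SimpleGraph V) (P : List V) (t : ℕ) : ends G P t ⊆ ends G P (t + 1) := by
  intro x hx
  rw [mem_ends] at hx ⊢
  obtain ⟨l, hl, h⟩ := hx
  exact ⟨l, Or.inl hl, h⟩

lemma ends_mono (G : SimpleGraph V) (P : List V) : Monotone (ends G P) :=
  monotone_nat_of_le_succ (ends_succ G P)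

lemma mem_ends_succ {G : SimpleGraph V} {P l : List V} {t : ℕ} {a b c : V}
    (hl : l ∈ reach G P t) (ha : l.head? = some a) (hab : G.Adj a b) (hcb : [c, b] <:+: l) :
    c ∈ ends G P (t + 1) := by
  obtain ⟨s, u, rfl⟩ := hcb
  rw [mem_ends]
  refine ⟨(s ++ [c]).reverse ++ b :: u,
    Or.inr ⟨_, hl, a, b, s ++ [c], u, by simp, ?_, hab, rfl⟩, by simp⟩
  rw [← ha]
  cases s <;> simp

/-- Every edge of `P` missing from a rotated path meets the set of endpoints. -/
lemma pair_infix_of_reach {G : SimpleGraph V} {P : List V} {t : ℕ} :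
    ∀ l ∈ reach G P t, ∀ x y, [x, y] <:+: P →
      [x, y] <:+: l ∨ [y, x] <:+: l ∨ x ∈ ends G P t ∨ y ∈ ends G P t := by
  induction t with
  | zero => rintro l rfl x y h; exact Or.inl h
  | succ t ih =>
    rintro l (hl | hl) x y hxy
    · rcases ih l hl x y hxy with h | h | h | h
      · exact Or.inl h
      · exact Or.inr (Or.inl h)
      · exact Or.inr (Or.inr (Or.inl (ends_succ G P t h)))
      · exact Or.inr (Or.inr (Or.inr (ends_succ G P t h)))
    · obtain ⟨l₀, hl₀, a, b, pre, suf, rfl, ha, hab, rfl⟩ := hl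
      have hnew : ∀ c, pre.getLast? = some c → c ∈ ends G P (t + 1) := by
        intro c hc
        rw [mem_ends]
        refine ⟨pre.reverse ++ b :: suf, Or.inr ⟨_, hl₀, a, b, pre, suf, rfl, ha, hab, rfl⟩, ?_⟩
        simp [hc]
      have hpair : ∀ x y, [x, y] <:+: pre ++ b :: suf →
          [x, y] <:+: pre.reverse ++ b :: suf ∨ [y, x] <:+: pre.reverse ++ b :: suf ∨
            x ∈ ends G P (t + 1) := by
        intro x y h
        rcases infix_append_cases h with h | h | ⟨s, c, u, hw, hc⟩
        · have := (List.reverse_infix).2 h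
          exact Or.inr (Or.inl (List.IsInfix.trans (by simpa using this)
            (List.prefix_append _ _).isInfix))
        · exact Or.inl (h.trans (List.suffix_append _ _).isInfix)
        · have : x = c := by
            rcases s with _ | ⟨s0, s⟩
            · simpa using (List.cons.inj hw).1
            · have := congrArg List.length hw
              simp at this
              omega
          exact Or.inr (Or.inr (this ▸ hnew c hc))
      rcases ih _ hl₀ x y hxy with h | h | h | h
      · rcases hpair x y h with h | h | h <;> tauto
      · rcases hpair y x h with h | h | h <;> tauto
      · exact Or.inr (Or.inr (Or.inl (ends_succ G P t h)))
      · exact Or.inr (Or.inr (Or.inr (ends_succ G P t h)))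

/-- Pósa's observation: a neighbour of an endpoint is itself an endpoint, or is next on `P` to an
endpoint obtained with one more rotation. -/
lemma posa {G Γ : SimpleGraph V} (hG : G ≤ Γ) {P : List V} (hP : IsLongestPathOn Γ P) {t : ℕ}
    {a v : V} (ha : a ∈ ends G P t) (hav : G.Adj a v) :
    v ∈ ends G P t ∨ ∃ c ∈ ends G P (t + 1), [c, v] <:+: P ∨ [v, c] <:+: P := by
  by_cases hvt : v ∈ ends G P t
  · exact Or.inl hvt
  refine Or.inr ?_
  obtain ⟨l, hl, hal⟩ := mem_ends.1 ha
  obtain ⟨⟨-, hnd, -⟩, hperm, hlast⟩ := reach_path hG hP.1 l hl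
  have hPnd := hP.1.2.1
  have hvl : v ∈ l := adj_mem_of_longest hG hP hl hal hav
  have hvP : v ∈ P := hperm.mem_iff.1 hvl
  have hhead : ∀ l' ∈ reach G P t, l'.head? ≠ some v :=
    fun l' hl' h => hvt (mem_ends.2 ⟨l', hl', h⟩)
  have hPr : P ∈ reach G P t := by
    clear * -
    induction t with
    | zero => rfl
    | succ t ih => exact Or.inl ih
  obtain ⟨c, hc⟩ := exists_pred hvl (hhead l hl)
  have hcE : c ∈ ends G P (t + 1) := mem_ends_succ hl hal hav hc
  obtain ⟨u, hu⟩ := exists_pred hvP (hhead P hPr)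
  rcases pair_infix_of_reach l hl u v hu with h | h | h | h
  · exact ⟨c, hcE, Or.inl (pair_infix_left_unique hnd h hc ▸ hu)⟩
  · have hne : P.getLast? ≠ some v := hlast ▸ getLast?_ne_of_pair hnd h
    obtain ⟨u', hu'⟩ := exists_succ hvP hne
    rcases pair_infix_of_reach l hl v u' hu' with h' | h' | h' | h'
    · have : u = u' := pair_infix_right_unique hnd h h'
      subst this
      exact absurd hu' (pair_infix_asymm hPnd hu)
    · exact ⟨c, hcE, Or.inr (pair_infix_left_unique hnd h' hc ▸ hu')⟩
    · exact absurd h' hvt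
    · exact ⟨u', ends_succ G P t h', Or.inr hu'⟩
  · exact ⟨u, ends_succ G P t h, Or.inl hu⟩
  · exact absurd h hvt

open Classical in
lemma card_succ_le {w : List V} (hw : w.Nodup) (S : Finset V) :
    (Finset.univ.filter fun x => ∃ y ∈ S, [y, x] <:+: w).card ≤ S.card := by
  refine Finset.card_le_card_of_forall_subsingleton (fun x y => [y, x] <:+: w) ?_ ?_
  · intro x hx
    exact (Finset.mem_filter.1 hx).2
  · intro y _ x hx x' hx'
    exact pair_infix_right_unique hw hx.2 hx'.2

open Classical in
lemma card_pred_le {w : List V} (hw : w.Nodup) (S : Finset V) :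
    (Finset.univ.filter fun x => ∃ y ∈ S, [x, y] <:+: w).card ≤ S.card := by
  refine Finset.card_le_card_of_forall_subsingleton (fun x y => [x, y] <:+: w) ?_ ?_
  · intro x hx
    exact (Finset.mem_filter.1 hx).2
  · intro y _ x hx x' hx'
    exact pair_infix_left_unique hw hx.2 hx'.2

open Classical in
/-- Counting form of `posa`: a vertex of `P` has at most two neighbours on `P`. -/
lemma card_nbrs_ends_le {G Γ : SimpleGraph V} (hG : G ≤ Γ) {P : List V}
    (hP : IsLongestPathOn Γ P) (t : ℕ) :
    (Finset.univ.filter fun v => ∃ a ∈ ends G P t, G.Adj a v).card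
      ≤ (ends G P t).card + 2 * (ends G P (t + 1)).card := by
  have hnd := hP.1.2.1
  have hsub : (Finset.univ.filter fun v => ∃ a ∈ ends G P t, G.Adj a v) ⊆
      ends G P t ∪ ((Finset.univ.filter fun x => ∃ y ∈ ends G P (t + 1), [y, x] <:+: P) ∪
        (Finset.univ.filter fun x => ∃ y ∈ ends G P (t + 1), [x, y] <:+: P)) := by
    intro v hv
    obtain ⟨a, ha, hav⟩ := (Finset.mem_filter.1 hv).2
    simp only [Finset.mem_union, Finset.mem_filter, Finset.mem_univ, true_and]
    rcases posa hG hP ha hav with h | ⟨c, hc, h | h⟩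
    · exact Or.inl h
    · exact Or.inr (Or.inl ⟨c, hc, h⟩)
    · exact Or.inr (Or.inr ⟨c, hc, h⟩)
  have h1 := Finset.card_le_card hsub
  have h2 := Finset.card_union_le (ends G P t)
    ((Finset.univ.filter fun x => ∃ y ∈ ends G P (t + 1), [y, x] <:+: P) ∪
        (Finset.univ.filter fun x => ∃ y ∈ ends G P (t + 1), [x, y] <:+: P))
  have h3 := Finset.card_union_le
    (Finset.univ.filter fun x => ∃ y ∈ ends G P (t + 1), [y, x] <:+: P)
    (Finset.univ.filter fun x => ∃ y ∈ ends G P (t + 1), [x, y] <:+: P)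
  have h4 : (Finset.univ.filter fun x => ∃ y ∈ ends G P (t + 1), [y, x] <:+: P).card
      ≤ (ends G P (t + 1)).card := by
    convert card_succ_le hnd (ends G P (t + 1))
  have h5 : (Finset.univ.filter fun x => ∃ y ∈ ends G P (t + 1), [x, y] <:+: P).card
      ≤ (ends G P (t + 1)).card := by
    convert card_pred_le hnd (ends G P (t + 1))
  omega

end Rotations

/-! ### Growth of the set of endpoints -/

section Growth

open Classical in
lemma eC_eq_sum {V : Type*} (G : SimpleGraph V) (A B : Finset V) :
    eC G A B = ∑ a ∈ A, eC G {a} B := by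
  unfold eC
  rw [Finset.card_eq_sum_card_fiberwise (f := fun q => q.1) (t := A)]
  · refine Finset.sum_congr rfl fun a ha => ?_
    congr 1
    ext ⟨x, y⟩
    simp only [Finset.mem_filter, Finset.mem_product, Finset.mem_singleton]
    constructor
    · rintro ⟨⟨⟨_, h1⟩, h2⟩, rfl⟩; exact ⟨⟨rfl, h1⟩, h2⟩
    · rintro ⟨⟨rfl, h1⟩, h2⟩; exact ⟨⟨⟨ha, h1⟩, h2⟩, rfl⟩
  · intro q hq
    exact (Finset.mem_product.1 (Finset.mem_filter.1 hq).1).1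

lemma eC_eq_deg {n : ℕ} (G : SimpleGraph (Fin n)) (v : Fin n) :
    eC G {v} Finset.univ = deg G v := by
  classical
  have h : ((({v} : Finset (Fin n)) ×ˢ (Finset.univ : Finset (Fin n))).filter
      (fun q => G.Adj q.1 q.2)) = {v} ×ˢ G.neighborFinset v := by
    ext ⟨a, b⟩
    simp only [Finset.mem_filter, Finset.mem_product, Finset.mem_singleton, Finset.mem_univ,
      and_true, SimpleGraph.mem_neighborFinset]
    constructor
    · rintro ⟨rfl, h⟩; exact ⟨rfl, h⟩
    · rintro ⟨rfl, h⟩; exact ⟨rfl, h⟩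
  have hd : deg G v = (G.neighborFinset v).card := by
    rw [deg, ← Set.ncard_coe_finset, SimpleGraph.coe_neighborFinset]
  rw [hd]
  calc eC G {v} Finset.univ = (({v} : Finset (Fin n)) ×ˢ G.neighborFinset v).card := by
        unfold eC; rw [← h]
    _ = _ := by rw [Finset.card_product, Finset.card_singleton, one_mul]

open Classical in
/-- The entries of `w` which are first in `w` or come right after an element of `T`. -/
noncomputable def nextSet {V : Type*} (T : Finset V) (w : List V) : Finset V :=
  w.toFinset.filter fun x => w.head? = some x ∨ ∃ y ∈ T, [y, x] <:+: w

open Classical in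
lemma card_nextSet_le [Fintype V] (T : Finset V) {w : List V} (hw : w.Nodup) :
    (nextSet T w).card ≤ (T.filter (· ∈ w)).card + 1 := by
  have hsub : nextSet T w ⊆ (Finset.univ.filter fun x => ∃ y ∈ T.filter (· ∈ w), [y, x] <:+: w) ∪
      (Finset.univ.filter fun x => w.head? = some x) := by
    intro x hx
    simp only [nextSet, Finset.mem_filter] at hx
    simp only [Finset.mem_union, Finset.mem_filter, Finset.mem_univ, true_and]
    rcases hx.2 with h | ⟨y, hy, h⟩
    · exact Or.inr h
    · exact Or.inl ⟨y, ⟨hy, h.subset (by simp)⟩, h⟩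
  have h1 : (Finset.univ.filter fun x => ∃ y ∈ T.filter (· ∈ w), [y, x] <:+: w).card
      ≤ (T.filter (· ∈ w)).card := by
    convert card_succ_le hw (T.filter (· ∈ w))
  have h2 : (Finset.univ.filter fun x => w.head? = some x).card ≤ 1 := by
    rw [Finset.card_le_one]
    intro x hx y hy
    rw [Finset.mem_filter] at hx hy
    simpa [hx.2] using hy.2
  exact ((Finset.card_le_card hsub).trans (Finset.card_union_le _ _)).trans (add_le_add h1 h2)

lemma card_nextSet_le_length (T : Finset V) (w : List V) : (nextSet T w).card ≤ w.length := by
  classical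
  exact (Finset.card_le_card (Finset.filter_subset _ _)).trans (List.toFinset_card_le _)

lemma mem_nextSet [Fintype V] {G : SimpleGraph V} {P l w : List V} {t : ℕ} {a x : V}
    (hl : l ∈ reach G P t) (ha : l.head? = some a) (hax : G.Adj a x) (hw : w <:+: l)
    (hx : x ∈ w) : x ∈ nextSet (ends G P (t + 1)) w := by
  simp only [nextSet, Finset.mem_filter, List.mem_toFinset]
  refine ⟨hx, ?_⟩
  by_cases h : w.head? = some x
  · exact Or.inl h
  · obtain ⟨c, hc⟩ := exists_pred hx h
    exact Or.inr ⟨c, mem_ends_succ hl ha hax (hc.trans hw), hc⟩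

/-- Double counting of the edges leaving a set `A` of endpoints. Fix for each `a ∈ A` a rotated path
starting at `a`, and cut `P` into `K` segments of length at most `L`. If the path of `a` traverses
a segment `w` in its original or reversed direction, then every neighbour of `a` on `w`, except
possibly the first vertex met, directly follows an endpoint obtained with one more rotation; so the
neighbours of `a` in `w` lie in a set of size `|T ∩ w| + 1` depending only on the direction, where
`T` is the new set of endpoints. Each path fails to traverse at most `t` segments in one of the two
ways. Upper bounds for edge counts in `G` are then applied to each segment and direction. -/
lemma linear_step {n L t : ℕ} {p ε δ : ℝ} {G G' Γ : SimpleGraph (Fin n)} {P : List (Fin n)}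
    (hp : 0 ≤ p) (hL : 0 < L) (hPR : PseudoRandom n L p ε δ G) (hG' : G' ≤ G) (hΓ : G' ≤ Γ)
    (hP : IsLongestPathOn Γ P) {A : Finset (Fin n)} (hA : A ⊆ ends G' P t) :
    ∃ K : ℕ, K * L ≤ n + L ∧ (eC G' A Finset.univ : ℝ) ≤
      p * A.card * ((ends G' P (t + 1)).card + K) + p * L * (t * A.card)
        + 3 * K * (δ * p * n * L) := by
  classical
  have hPnd := hP.1.2.1
  obtain ⟨W, hW1, hW2, hW3, hW4⟩ := exists_segments L hL P hPnd
  have hPlen : P.length ≤ n := by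
    have := hPnd.length_le_card
    rwa [Fintype.card_fin] at this
  refine ⟨W.card, by omega, ?_⟩
  set T := ends G' P (t + 1) with hT
  have hch : ∀ a : Fin n, ∃ l : List (Fin n), a ∈ A → l ∈ reach G' P t ∧ l.head? = some a := by
    intro a
    by_cases ha : a ∈ A
    · obtain ⟨l, h1, h2⟩ := mem_ends.1 (hA ha)
      exact ⟨l, fun _ => ⟨h1, h2⟩⟩
    · exact ⟨[], fun h => absurd h ha⟩
  choose f hf using hch
  let Ap : List (Fin n) → Finset (Fin n) := fun w => A.filter fun a => w <:+: f a
  let Am : List (Fin n) → Finset (Fin n) :=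
    fun w => A.filter fun a => ¬ w <:+: f a ∧ w.reverse <:+: f a
  let A0 : List (Fin n) → Finset (Fin n) :=
    fun w => A.filter fun a => ¬ w <:+: f a ∧ ¬ w.reverse <:+: f a
  have hcover : eC G' A Finset.univ ≤ ∑ w ∈ W, (eC G (Ap w) (nextSet T w) +
      (eC G (Am w) (nextSet T w.reverse) + eC G (A0 w) w.toFinset)) := by
    have hsub : ((A ×ˢ (Finset.univ : Finset (Fin n))).filter (fun q => G'.Adj q.1 q.2)) ⊆
        W.biUnion fun w => ((Ap w ×ˢ nextSet T w).filter (fun q => G.Adj q.1 q.2)) ∪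
          (((Am w ×ˢ nextSet T w.reverse).filter (fun q => G.Adj q.1 q.2)) ∪
            ((A0 w ×ˢ w.toFinset).filter (fun q => G.Adj q.1 q.2))) := by
      rintro ⟨a, x⟩ hq
      rw [Finset.mem_filter, Finset.mem_product] at hq
      obtain ⟨⟨haA, -⟩, hadj⟩ := hq
      simp only at haA hadj
      obtain ⟨hl, hhead⟩ := hf a haA
      have hxl := adj_mem_of_longest hΓ hP hl hhead hadj
      have hxP : x ∈ P := (reach_path hΓ hP.1 _ hl).2.1.mem_iff.1 hxl
      obtain ⟨w, hw, hxw⟩ := hW2 x hxP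
      rw [Finset.mem_biUnion]
      refine ⟨w, hw, ?_⟩
      simp only [Finset.mem_union, Finset.mem_filter, Finset.mem_product, List.mem_toFinset,
        Ap, Am, A0, hG' hadj, and_true, haA, true_and, hxw]
      by_cases h1 : w <:+: f a
      · exact Or.inl ⟨h1, mem_nextSet hl hhead hadj h1 hxw⟩
      · by_cases h2 : w.reverse <:+: f a
        · exact Or.inr (Or.inl ⟨⟨h1, h2⟩,
            mem_nextSet hl hhead hadj h2 (List.mem_reverse.2 hxw)⟩)
        · exact Or.inr (Or.inr ⟨h1, h2⟩)
    have hle := Finset.card_le_card hsub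
    refine le_trans (le_trans ?_ (hle.trans Finset.card_biUnion_le)) (Finset.sum_le_sum ?_)
    · unfold eC; apply le_of_eq; congr!
    · intro w _
      refine (Finset.card_union_le _ _).trans (add_le_add ?_ ((Finset.card_union_le _ _).trans
        (add_le_add ?_ ?_)))
      all_goals unfold eC; apply le_of_eq; congr!
  have hwnd : ∀ w ∈ W, w.Nodup := fun w hw => (hW1 w hw).1.sublist.nodup hPnd
  have hsegment : ∀ w ∈ W, ((eC G (Ap w) (nextSet T w) +
      (eC G (Am w) (nextSet T w.reverse) + eC G (A0 w) w.toFinset) : ℕ) : ℝ) ≤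
      p * A.card * ((T.filter (· ∈ w)).card + 1) + p * L * (A0 w).card
        + 3 * (δ * p * n * L) := by
    intro w hw
    have hwL : w.toFinset.card ≤ L := w.toFinset_card_le.trans (hW1 w hw).2
    have hn1 : (nextSet T w).card ≤ L := (card_nextSet_le_length T w).trans (hW1 w hw).2
    have hn2 : (nextSet T w.reverse).card ≤ L := by
      have := card_nextSet_le_length T w.reverse
      rw [List.length_reverse] at this
      exact this.trans (hW1 w hw).2
    have hc1 : ((nextSet T w).card : ℝ) ≤ (T.filter (· ∈ w)).card + 1 := by
      have : (nextSet T w).card ≤ (T.filter (· ∈ w)).card + 1 := by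
        convert card_nextSet_le T (hwnd w hw)
      exact_mod_cast this
    have hc2 : ((nextSet T w.reverse).card : ℝ) ≤ (T.filter (· ∈ w)).card + 1 := by
      have : (nextSet T w.reverse).card ≤ (T.filter (· ∈ w)).card + 1 := by
        convert card_nextSet_le T (List.nodup_reverse.2 (hwnd w hw)) using 4
        simp only [List.mem_reverse]
      exact_mod_cast this
    have hc3 : (w.toFinset.card : ℝ) ≤ L := by exact_mod_cast hwL
    have e1 := hPR.large (Ap w) (nextSet T w) hn1
    have e2 := hPR.large (Am w) (nextSet T w.reverse) hn2
    have e3 := hPR.large (A0 w) w.toFinset hwL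
    have hAA : ((Ap w).card : ℝ) + (Am w).card ≤ A.card := by
      have hd : Disjoint (Ap w) (Am w) := by
        rw [Finset.disjoint_left]
        intro a ha ha'
        exact (Finset.mem_filter.1 ha').2.1 (Finset.mem_filter.1 ha).2
      have : (Ap w ∪ Am w).card ≤ A.card :=
        Finset.card_le_card (Finset.union_subset (Finset.filter_subset _ _)
          (Finset.filter_subset _ _))
      rw [Finset.card_union_of_disjoint hd] at this
      exact_mod_cast this
    have f1 : p * (Ap w).card * (nextSet T w).card
        ≤ p * (Ap w).card * ((T.filter (· ∈ w)).card + 1) := by gcongr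
    have f2 : p * (Am w).card * (nextSet T w.reverse).card
        ≤ p * (Am w).card * ((T.filter (· ∈ w)).card + 1) := by gcongr
    have f3 : p * (A0 w).card * w.toFinset.card ≤ p * (A0 w).card * L := by gcongr
    have f4 : p * ((Ap w).card + (Am w).card) * (((T.filter (· ∈ w)).card : ℝ) + 1)
        ≤ p * A.card * ((T.filter (· ∈ w)).card + 1) := by gcongr
    push_cast
    nlinarith
  have hTsum : ∑ w ∈ W, ((T.filter (· ∈ w)).card : ℝ) ≤ T.card := by
    have hd : (W : Set (List (Fin n))).PairwiseDisjoint fun w => T.filter (· ∈ w) := by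
      intro w hw w' hw' hne
      rw [Function.onFun, Finset.disjoint_left]
      intro x hx hx'
      exact hne (hW3 w hw w' hw' x (Finset.mem_filter.1 hx).2 (Finset.mem_filter.1 hx').2)
    have := Finset.card_biUnion hd
    rw [← Nat.cast_sum, ← this]
    exact_mod_cast Finset.card_le_card
      (Finset.biUnion_subset.2 fun w _ => Finset.filter_subset _ _)
  have hA0sum : ∑ w ∈ W, ((A0 w).card : ℝ) ≤ t * A.card := by
    have hswap : ∑ w ∈ W, (A0 w).card
        = ∑ a ∈ A, (W.filter fun w => ¬ w <:+: f a ∧ ¬ w.reverse <:+: f a).card := by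
      simp only [A0, Finset.card_filter]
      exact Finset.sum_comm
    have hb : ∀ a ∈ A, (W.filter fun w => ¬ w <:+: f a ∧ ¬ w.reverse <:+: f a).card ≤ t := by
      intro a ha
      convert card_bad_le (fun w hw => (hW1 w hw).1) hW3 _ (hf a ha).1
    have := Finset.sum_le_card_nsmul A _ t hb
    rw [← hswap, smul_eq_mul, mul_comm] at this
    exact_mod_cast this
  calc (eC G' A Finset.univ : ℝ) ≤ ∑ w ∈ W, ((eC G (Ap w) (nextSet T w) +
      (eC G (Am w) (nextSet T w.reverse) + eC G (A0 w) w.toFinset) : ℕ) : ℝ) := by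
        exact_mod_cast hcover
    _ ≤ ∑ w ∈ W, (p * A.card * ((T.filter (· ∈ w)).card + 1) + p * L * (A0 w).card
        + 3 * (δ * p * n * L)) := Finset.sum_le_sum hsegment
    _ = p * A.card * (∑ w ∈ W, ((T.filter (· ∈ w)).card : ℝ) + W.card)
        + p * L * ∑ w ∈ W, ((A0 w).card : ℝ) + 3 * W.card * (δ * p * n * L) := by
        rw [Finset.sum_add_distrib, Finset.sum_add_distrib, ← Finset.mul_sum, ← Finset.mul_sum,
          Finset.sum_add_distrib, Finset.sum_const, Finset.sum_const, nsmul_eq_mul, nsmul_eq_mul]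
        ring
    _ ≤ _ := by gcongr

lemma eC_le_sdiff_add {n : ℕ} (G H : SimpleGraph (Fin n)) (A B : Finset (Fin n)) :
    eC G A B ≤ eC (G \ H) A B + eC H A B := by
  classical
  have hsub : ((A ×ˢ B).filter fun q => G.Adj q.1 q.2) ⊆
      ((A ×ˢ B).filter fun q => (G \ H).Adj q.1 q.2) ∪
        ((A ×ˢ B).filter fun q => H.Adj q.1 q.2) := by
    intro q hq
    simp only [Finset.mem_union, Finset.mem_filter, SimpleGraph.sdiff_adj] at hq ⊢
    tauto
  have h := (Finset.card_le_card hsub).trans (Finset.card_union_le _ _)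
  unfold eC
  refine le_trans (le_of_eq ?_) (h.trans (le_of_eq ?_)) <;> congr!

/-- Apart from at most `r` vertices, all vertices of a set have `H`-degree at most the bound that
the Pósa condition puts on the vertex of rank `r + 1`. -/
lemma exists_low_degree {n r : ℕ} {p ε : ℝ} {H : SimpleGraph (Fin n)} (hH : PosaFamily n p ε H)
    (hr : (r : ℝ) + 1 < n / 2) (S : Finset (Fin n)) :
    ∃ A ⊆ S, S.card ≤ A.card + r ∧
      ∀ a ∈ A, (deg H a : ℝ) ≤ (n - (r + 1)) * p - ε * n * p := by
  classical
  obtain ⟨v, hbij, hmono, hdeg⟩ := hH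
  have hrn : r < n := by
    have : (r : ℝ) < n := by
      have : (0 : ℝ) ≤ n := by positivity
      linarith
    exact_mod_cast this
  refine ⟨S.filter fun a => ∃ j : Fin n, r ≤ j.1 ∧ v j = a, Finset.filter_subset _ _, ?_, ?_⟩
  · rw [← Finset.card_filter_add_card_filter_not (s := S)
      (fun a => ∃ j : Fin n, r ≤ j.1 ∧ v j = a)]
    refine Nat.add_le_add_left ?_ _
    have hsub : (S.filter fun a => ¬ ∃ j : Fin n, r ≤ j.1 ∧ v j = a) ⊆
        (Finset.univ.filter fun j : Fin n => j.1 < r).image v := by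
      intro a ha
      have ha := (Finset.mem_filter.1 ha).2
      obtain ⟨j, rfl⟩ := hbij.2 a
      rw [Finset.mem_image]
      refine ⟨j, ?_, rfl⟩
      rw [Finset.mem_filter]
      refine ⟨Finset.mem_univ _, ?_⟩
      by_contra hcon
      exact ha ⟨j, not_lt.1 hcon, rfl⟩
    refine (Finset.card_le_card hsub).trans (Finset.card_image_le.trans ?_)
    have hinj : (Finset.univ.filter fun j : Fin n => j.1 < r).card ≤ (Finset.range r).card := by
      refine Finset.card_le_card_of_injOn (fun j => j.1) ?_ ?_
      · intro j hj
        have := (Finset.mem_filter.1 hj).2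
        simpa using this
      · intro i _ j _ h
        exact Fin.ext h
    simpa using hinj
  · intro a ha
    obtain ⟨j, hj, rfl⟩ := (Finset.mem_filter.1 ha).2
    have h1 : deg H (v j) ≤ deg H (v ⟨r, hrn⟩) := hmono ⟨r, hrn⟩ j hj
    have h2 := hdeg ⟨r, hrn⟩ hr
    have h1' : (deg H (v j) : ℝ) ≤ deg H (v ⟨r, hrn⟩) := by exact_mod_cast h1
    exact h1'.trans h2

/-- After discarding `r` vertices, the remaining vertices have degree at least about
`r p + ε n p` in `G \ H`: the degree in `G` is about `n p`, of which `H` removes at most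
`(n - r - 1) p - ε n p`. -/
lemma exists_high_degree {n L r : ℕ} {p ε δ : ℝ} {G H : SimpleGraph (Fin n)}
    (hPR : PseudoRandom n L p ε δ G) (hH : PosaFamily n p ε H)
    (hr : (r : ℝ) + 1 < n / 2) (S : Finset (Fin n)) :
    ∃ A ⊆ S, S.card ≤ A.card + r ∧
      A.card * ((r + 1) * p + (ε - δ) * (n * p)) ≤ eC (G \ H) A Finset.univ := by
  obtain ⟨A, hAS, hcard, hdeg⟩ := exists_low_degree hH hr S
  refine ⟨A, hAS, hcard, ?_⟩
  rw [eC_eq_sum, Nat.cast_sum, ← nsmul_eq_mul]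
  refine Finset.card_nsmul_le_sum _ _ _ fun a ha => ?_
  have h1 := hPR.degree a
  have h2 : (eC G {a} Finset.univ : ℝ) ≤ eC (G \ H) {a} Finset.univ + eC H {a} Finset.univ := by
    exact_mod_cast eC_le_sdiff_add G H {a} Finset.univ
  have h3 := hdeg a ha
  rw [← eC_eq_deg] at h3
  nlinarith

/-- Small sets of endpoints double in size with every further rotation. -/
lemma small_step {n L t : ℕ} {p ε δ : ℝ} {G H Γ : SimpleGraph (Fin n)} {P : List (Fin n)}
    (hp : 0 ≤ p) (hn : 3 ≤ n) (hδ : δ ≤ ε / 2) (hPR : PseudoRandom n L p ε δ G)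
    (hH : PosaFamily n p ε H) (hΓ : G \ H ≤ Γ) (hP : IsLongestPathOn Γ P)
    (hne : (ends (G \ H) P t).Nonempty)
    (hsm : ((ends (G \ H) P t).card : ℝ) ≤ ε / 40 * n) :
    2 * (ends (G \ H) P t).card ≤ (ends (G \ H) P (t + 1)).card := by
  classical
  have hn' : (3 : ℝ) ≤ n := by exact_mod_cast hn
  set S := ends (G \ H) P t with hS
  obtain ⟨A, hAS, hcard, hedges⟩ := exists_high_degree (r := 0) hPR hH
    (by push_cast; linarith) S
  have hAeq : A = S := Finset.eq_of_subset_of_card_le hAS (by omega)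
  rw [hAeq] at hedges
  set N := Finset.univ.filter fun v => ∃ a ∈ S, (G \ H).Adj a v with hN
  have hle : eC (G \ H) S Finset.univ ≤ eC G S N := by
    unfold eC
    refine Finset.card_le_card ?_
    rintro ⟨a, x⟩ hq
    simp only [Finset.mem_filter, Finset.mem_product, Finset.mem_univ, and_true] at hq
    simp only [hN, Finset.mem_filter, Finset.mem_product, Finset.mem_univ, true_and]
    exact ⟨⟨hq.1, a, hq.1, hq.2⟩, (sdiff_le : G \ H ≤ G) hq.2⟩
  have hbig : 5 * S.card < N.card := by
    by_contra hcon
    have h1 := hPR.small S N hne hsm (not_lt.1 hcon)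
    have h2 : (eC (G \ H) S Finset.univ : ℝ) ≤ eC G S N := by exact_mod_cast hle
    have h3 : (S.card : ℝ) * (ε / 2 * (n * p))
        ≤ S.card * (((0 : ℕ) + 1) * p + (ε - δ) * (n * p)) := by
      refine mul_le_mul_of_nonneg_left ?_ (by positivity)
      have : ε / 2 * (n * p) ≤ (ε - δ) * (n * p) := by
        refine mul_le_mul_of_nonneg_right (by linarith) (by positivity)
      push_cast
      linarith
    rw [mul_comm] at h3
    exact absurd (h3.trans (hedges.trans h2)) (not_le.2 h1)
  have hposa : N.card ≤ S.card + 2 * (ends (G \ H) P (t + 1)).card := by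
    rw [hN]
    convert card_nbrs_ends_le hΓ hP t
  omega

/-- A linear set of endpoints grows by `εn/4` with every further rotation, until its size
reaches `n/2`. -/
lemma big_step {n L t : ℕ} {p ε δ : ℝ} {G H Γ : SimpleGraph (Fin n)} {P : List (Fin n)}
    (hp : 0 < p) (hε : 0 < ε) (hε1 : ε < 1) (hn : 200 ≤ ε * n) (hδ : δ = ε ^ 2 / 6000)
    (hPR : PseudoRandom n L p ε δ G)
    (hH : PosaFamily n p ε H) (hΓ : G \ H ≤ Γ) (hP : IsLongestPathOn Γ P)
    (hL : 0 < L) (hLn : L ≤ n) (hL2 : 2 ≤ δ * L) (htL : (t : ℝ) * L ≤ δ * n)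
    (hbig : ε / 40 * n < (ends (G \ H) P t).card) :
    min ((ends (G \ H) P t).card : ℝ) (n / 2) + ε / 4 * n ≤ (ends (G \ H) P (t + 1)).card := by
  set S := ends (G \ H) P t with hS
  -- `m` vertices of `S` are kept, so that the error terms are small relative to `|A| p n`;
  -- the degree condition is applied at rank about `min |S| (n / 2) - m`
  set m : ℕ := ⌈ε / 80 * n⌉₊ with hm
  have hm1 : ε / 80 * n ≤ m := Nat.le_ceil _
  have hm2 : (m : ℝ) < ε / 80 * n + 1 := Nat.ceil_lt_add_one (by positivity)
  have hnpos : (200 : ℝ) ≤ n := by nlinarith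
  set r : ℕ := min S.card (n / 2) - m with hr
  have hrlow : min (S.card : ℝ) (n / 2) - 1 / 2 - m ≤ r := by
    have h1 : min S.card (n / 2) ≤ r + m := by omega
    have h2 : ((min S.card (n / 2) : ℕ) : ℝ) ≤ r + m := by exact_mod_cast h1
    rw [Nat.cast_min] at h2
    have h3 : (n : ℝ) / 2 - 1 / 2 ≤ ((n / 2 : ℕ) : ℝ) := by
      have : n ≤ 2 * (n / 2) + 1 := by omega
      have : (n : ℝ) ≤ 2 * ((n / 2 : ℕ) : ℝ) + 1 := by exact_mod_cast this
      linarith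
    rcases min_le_iff.1 h2 with h | h
    · have := min_le_left (S.card : ℝ) (n / 2); linarith
    · have := min_le_right (S.card : ℝ) (n / 2); linarith
  have hrhalf : (r : ℝ) + 1 < n / 2 := by
    rcases Nat.eq_zero_or_pos r with h0 | h0
    · rw [h0]; push_cast; linarith
    · have h1 : r + m ≤ n / 2 := by omega
      have h2 : 2 * (r + m) ≤ n := by omega
      have h3 : 2 * ((r : ℝ) + m) ≤ n := by exact_mod_cast h2
      linarith
  obtain ⟨A, hAS, hcard, hedges⟩ := exists_high_degree hPR hH hrhalf S
  have hSm : m ≤ S.card := by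
    have : (m : ℝ) ≤ S.card := by linarith
    exact_mod_cast this
  have hAm : m ≤ A.card := by omega
  have hAm' : ε / 80 * n ≤ A.card := hm1.trans (by exact_mod_cast hAm)
  have hApos : (0 : ℝ) < A.card := by nlinarith
  obtain ⟨K, hK, hlin⟩ := linear_step hp.le hL hPR sdiff_le hΓ hP hAS
  set T := ends (G \ H) P (t + 1) with hT
  have hδpos : 0 < δ := by rw [hδ]; positivity
  have hK' : (K : ℝ) * L ≤ 2 * n := by
    have : K * L ≤ 2 * n := by omega
    exact_mod_cast this
  have hKn : (K : ℝ) ≤ δ * n := by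
    have hK0 : (0 : ℝ) ≤ K := by positivity
    have h1 : (K : ℝ) * 2 ≤ K * (δ * L) := mul_le_mul_of_nonneg_left hL2 hK0
    have h2 : δ * (K * L) ≤ δ * (2 * n) := mul_le_mul_of_nonneg_left hK' hδpos.le
    nlinarith
  have herr : 3 * K * (δ * p * n * L) ≤ (A.card : ℝ) * p * (ε * n * (2 / 25)) := by
    calc 3 * K * (δ * p * n * L) = 3 * δ * p * n * (K * L) := by ring
      _ ≤ 3 * δ * p * n * (2 * n) := by gcongr
      _ = (ε / 80 * n) * p * (ε * n * (2 / 25)) := by rw [hδ]; ring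
      _ ≤ _ := by gcongr
  have hcut : p * L * (t * A.card) ≤ (A.card : ℝ) * p * (δ * n) := by
    calc p * L * (t * A.card) = A.card * p * (t * L) := by ring
      _ ≤ _ := by gcongr
  have hmain : (A.card : ℝ) * p * ((r + 1) + (ε - δ) * n)
      ≤ A.card * p * (T.card + K + δ * n + ε * n * (2 / 25)) := by
    linarith
  have hfin := le_of_mul_le_mul_left hmain (by positivity)
  have hδε : δ * n ≤ ε * n / 6000 := by
    have h1 : ε ^ 2 ≤ ε := by nlinarith
    have h2 : ε ^ 2 * n ≤ ε * n := by gcongr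
    rw [hδ]
    linarith
  linarith

/-- The deterministic core: in a pseudorandom graph, `t` rotations produce at least
`(1/2 + ε/4)n` endpoints, where `t` is logarithmic in `n`. -/
lemma many_ends {n L : ℕ} {p ε δ : ℝ} {G H Γ : SimpleGraph (Fin n)} {P : List (Fin n)}
    (hp : 0 < p) (hε : 0 < ε) (hε1 : ε < 1) (hn : 200 ≤ ε * n) (hδ : δ = ε ^ 2 / 6000)
    (hPR : PseudoRandom n L p ε δ G)
    (hH : PosaFamily n p ε H) (hΓ : G \ H ≤ Γ) (hP : IsLongestPathOn Γ P)
    (hL : 0 < L) (hLn : L ≤ n) (hL2 : 2 ≤ δ * L)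
    (htL : ((Nat.log 2 n + 1 + ⌈2 / ε⌉₊ : ℕ) : ℝ) * L ≤ δ * n) :
    (1 / 2 + ε / 4) * n ≤ (ends (G \ H) P (Nat.log 2 n + 1 + ⌈2 / ε⌉₊ + 1)).card := by
  have hnpos : (200 : ℝ) ≤ n := by nlinarith
  have hn3 : 3 ≤ n := by
    have : (3 : ℝ) ≤ n := by linarith
    exact_mod_cast this
  set E := ends (G \ H) P with hE
  have hmono : ∀ {s t}, s ≤ t → (E s).card ≤ (E t).card :=
    fun h => Finset.card_le_card (ends_mono _ _ h)
  have hne : ∀ t, 0 < (E t).card := by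
    intro t
    refine lt_of_lt_of_le ?_ (hmono (Nat.zero_le t))
    rw [Finset.card_pos]
    obtain ⟨a, l, hal⟩ := List.exists_cons_of_ne_nil hP.1.1
    exact ⟨a, mem_ends.2 ⟨P, rfl, by rw [hal]; rfl⟩⟩
  set t₀ := Nat.log 2 n + 1 with ht₀
  -- otherwise the number of endpoints doubles `t₀` times and exceeds `n`
  have hstart : ε / 40 * n < (E t₀).card := by
    by_contra hcon
    have hpow : ∀ t ≤ t₀, 2 ^ t ≤ (E t).card := by
      intro t
      induction t with
      | zero => intro _; exact hne 0
      | succ t ih =>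
        intro ht
        have h1 := ih (by omega)
        have h2 : ((E t).card : ℝ) ≤ ε / 40 * n := by
          have : ((E t).card : ℝ) ≤ (E t₀).card := by exact_mod_cast hmono (by omega : t ≤ t₀)
          linarith [not_lt.1 hcon]
        have h3 := small_step hp.le hn3 (by rw [hδ]; nlinarith) hPR hH hΓ hP
          (Finset.card_pos.1 (hne t)) h2
        rw [pow_succ]
        change 2 ^ t * 2 ≤ (ends (G \ H) P (t + 1)).card
        change 2 ^ t ≤ (ends (G \ H) P t).card at h1
        omega
    have h1 := hpow t₀ le_rfl
    have h2 : (E t₀).card ≤ n := by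
      have := Finset.card_le_univ (E t₀)
      rwa [Fintype.card_fin] at this
    have h3 : n < 2 ^ t₀ := Nat.lt_pow_succ_log_self (by norm_num) n
    omega
  have hstep : ∀ j ≤ ⌈2 / ε⌉₊,
      min ((E (t₀ + j)).card : ℝ) (n / 2) + ε / 4 * n ≤ (E (t₀ + j + 1)).card := by
    intro j hj
    refine big_step hp hε hε1 hn hδ hPR hH hΓ hP hL hLn hL2 ?_ ?_
    · refine le_trans ?_ htL
      have : ((t₀ + j : ℕ) : ℝ) ≤ ((t₀ + ⌈2 / ε⌉₊ : ℕ) : ℝ) := by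
        exact_mod_cast Nat.add_le_add_left hj t₀
      gcongr
    · refine hstart.trans_le ?_
      exact_mod_cast hmono (Nat.le_add_right t₀ j)
  have hgrow : ∀ j ≤ ⌈2 / ε⌉₊, min (j * (ε / 4 * n)) ((n : ℝ) / 2) ≤ (E (t₀ + j)).card := by
    intro j
    induction j with
    | zero =>
      intro _
      refine (min_le_left _ _).trans ?_
      simp
    | succ j ih =>
      intro hj
      have h1 := ih (by omega)
      have h2 := hstep j (by omega)
      have h3 : (0 : ℝ) ≤ ε / 4 * n := by positivity
      rw [← add_assoc]
      refine le_trans ?_ h2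
      push_cast
      rcases le_total ((E (t₀ + j)).card : ℝ) (n / 2) with h | h
      · rw [min_eq_left h]
        rcases min_le_iff.1 h1 with h' | h'
        · exact (min_le_left _ _).trans (by nlinarith)
        · exact (min_le_right _ _).trans (by nlinarith)
      · rw [min_eq_right h]
        exact (min_le_right _ _).trans (by linarith)
  have hq := hgrow ⌈2 / ε⌉₊ le_rfl
  have hq2 : (n : ℝ) / 2 ≤ ⌈2 / ε⌉₊ * (ε / 4 * n) := by
    have h1 : 2 / ε ≤ ⌈2 / ε⌉₊ := Nat.le_ceil _
    calc (n : ℝ) / 2 = 2 / ε * (ε / 4 * n) := by field_simp; ring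
      _ ≤ _ := by gcongr
  rw [min_eq_right hq2] at hq
  have hlast := hstep ⌈2 / ε⌉₊ le_rfl
  rw [min_eq_right hq] at hlast
  linarith

end Growth

/-! ### Choice of the parameters -/

/-- The number of rotations is at most `3 log n`, since `1 / log 2 < 3 / 2`. -/
lemma rotations_le {n k : ℕ} (hn : 1 ≤ n) (hk : ((1 + k : ℕ) : ℝ) ≤ 3 / 2 * log n) :
    ((Nat.log 2 n + 1 + k : ℕ) : ℝ) ≤ 3 * log n := by
  have h1 : ((2 : ℝ) ^ Nat.log 2 n) ≤ n := by
    exact_mod_cast Nat.pow_log_le_self 2 (by omega)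
  have h2 := Real.log_le_log (by positivity) h1
  rw [Real.log_pow] at h2
  have h3 := Real.log_two_gt_d9
  have h4 : (0 : ℝ) ≤ Nat.log 2 n := by positivity
  push_cast at hk ⊢
  nlinarith

lemma eventually_parameters {ε δ η : ℝ} (hε : 0 < ε) (hδ : 0 < δ) (hη : 0 < η) :
    ∀ᶠ n : ℕ in atTop, 200 ≤ ε * n ∧ 13 / n ≤ η ∧ 1 ≤ log n ∧
      ((1 + ⌈2 / ε⌉₊ : ℕ) : ℝ) ≤ 3 / 2 * log n ∧ 3 * (2 / δ + 1) * log n ≤ δ * n := by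
  have hcast : Tendsto (fun n : ℕ => (n : ℝ)) atTop atTop := tendsto_natCast_atTop_atTop
  have hlog : Tendsto (fun n : ℕ => log (n : ℝ)) atTop atTop := Real.tendsto_log_atTop.comp hcast
  have hlit := (Real.isLittleO_log_id_atTop.bound
    (show 0 < δ / (3 * (2 / δ + 1)) by positivity))
  filter_upwards [hcast.eventually_ge_atTop (200 / ε), hcast.eventually_ge_atTop (13 / η),
    hcast.eventually_ge_atTop 1, hlog.eventually_ge_atTop 1,
    hlog.eventually_ge_atTop (((1 + ⌈2 / ε⌉₊ : ℕ) : ℝ) / (3 / 2)),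
    hcast.eventually hlit] with n h1 h2 h3 h4 h5 h6
  refine ⟨?_, ?_, h4, ?_, ?_⟩
  · rw [div_le_iff₀ hε] at h1; linarith
  · rw [div_le_iff₀ hη] at h2
    rw [div_le_iff₀ (by linarith)]; linarith
  · rw [div_le_iff₀ (by norm_num)] at h5; linarith
  · rw [Real.norm_eq_abs, Real.norm_eq_abs, id, abs_of_nonneg (by linarith),
      abs_of_nonneg (by linarith), div_mul_eq_mul_div, le_div_iff₀ (by positivity)] at h6
    linarith

/-- Lemma 4.3.  For every `0 < ε < 1` there exists `C > 0` such
that, for `p ≥ C log n / n`, a.a.s. for every `H ∈ H^ε_{n,p}(G)` with `G' = G ∖ H`,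
every path `P'` on `V` and every longest path `P = v_1…v_ℓ` in `G' ∪ P'`, there is a
set `U ⊆ V` with `|U| ≥ (1/2 + ε/4)n` such that every `v ∈ U` is the endpoint of a
longest path `Q_v` in `G' ∪ P'` with endpoints `v_ℓ` and `v` and `V(Q_v) = V(P)`. -/
theorem many_rotation_endpoints (ε : ℝ) (hε : 0 < ε) (hε1 : ε < 1) :
    ∃ C : ℝ, 0 < C ∧ ∀ η : ℝ, 0 < η → ∃ N : ℕ, ∀ n : ℕ, N ≤ n →
      ∀ p : ℝ, C * Real.log n / n ≤ p → p ≤ 1 →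
        1 - η ≤ Pr n p (fun G =>
          ∀ H : SimpleGraph (Fin n), H ≤ G → PosaFamily n p ε H →
            ∀ P' P : List (Fin n), P'.Nodup →
              IsLongestPathOn ((G \ H) ⊔ listGraph P') P →
              ∃ U : Set (Fin n), (1/2 + ε/4) * n ≤ (U.ncard : ℝ) ∧
                ∀ v ∈ U, ∃ Q : List (Fin n),
                  IsLongestPathOn ((G \ H) ⊔ listGraph P') Q ∧
                  Q.head? = some v ∧ Q.getLast? = P.getLast? ∧
                  Q.toFinset = P.toFinset) := by
  set δ : ℝ := ε ^ 2 / 6000 with hδ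
  have hδpos : 0 < δ := by positivity
  have hδ1 : δ ≤ 1 := by nlinarith
  have hδε : δ ≤ ε := by nlinarith
  refine ⟨144 / δ ^ 3, by positivity, fun η hη => ?_⟩
  obtain ⟨N, hN⟩ := eventually_atTop.1 (eventually_parameters hε hδpos hη)
  refine ⟨N, fun n hn p hp hp1 => ?_⟩
  obtain ⟨hn1, hn2, hlog, hceil, hlin⟩ := hN n hn
  have hnpos : (0 : ℝ) < n := by
    by_contra hcon
    nlinarith
  have hnone : 1 ≤ n := by exact_mod_cast hnpos
  have hlogpos : (0 : ℝ) < log n := by linarith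
  have hppos : 0 < p := lt_of_lt_of_le (by positivity) hp
  have hnp : 144 / δ ^ 3 * log n ≤ n * p := by
    rw [div_le_iff₀ hnpos] at hp
    linarith
  -- the length of the segments into which the path is cut
  set x : ℝ := δ * n / (3 * log n) with hx
  set L : ℕ := ⌊x⌋₊ with hL
  have hxlow : 2 / δ + 1 ≤ x := by
    rw [hx, le_div_iff₀ (by positivity)]
    linarith
  have hxpos : 0 < x := by positivity
  have hLx : (L : ℝ) ≤ x := Nat.floor_le hxpos.le
  have hxL : x - 1 < L := Nat.sub_one_lt_floor x
  have h2δ : 2 ≤ 2 / δ := by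
    rw [le_div_iff₀ hδpos]
    linarith
  have hL2 : 2 ≤ δ * L := by
    have h : 2 / δ ≤ L := by linarith
    rw [div_le_iff₀ hδpos] at h
    linarith
  have hLpos : 0 < L := by
    have : (0 : ℝ) < L := by linarith
    exact_mod_cast this
  have hxlog : 3 * log n * x = δ * n := by
    rw [hx]
    field_simp
  have hLn : L ≤ n := by
    have : (L : ℝ) ≤ n := by nlinarith
    exact_mod_cast this
  have htL : ((Nat.log 2 n + 1 + ⌈2 / ε⌉₊ : ℕ) : ℝ) * L ≤ δ * n := by
    rw [← hxlog]
    exact mul_le_mul (rotations_le hnone hceil) hLx (by positivity) (by positivity)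
  have hpL : 24 / δ ^ 2 ≤ p * L := by
    have h1 : x / 2 ≤ L := by linarith
    calc 24 / δ ^ 2 = 144 / δ ^ 3 * log n * (δ / (6 * log n)) := by
          field_simp
          norm_num
      _ ≤ n * p * (δ / (6 * log n)) := by gcongr
      _ = p * (x / 2) := by
          rw [hx]
          field_simp
          norm_num
      _ ≤ p * L := by gcongr
  have hpow : 16 / δ ^ 2 ≤ 144 / δ ^ 3 := by
    rw [div_le_div_iff₀ (by positivity) (by positivity)]
    nlinarith [pow_pos hδpos 2, pow_pos hδpos 3]
  have hpow' : 96 / ε ≤ 144 / δ ^ 3 := by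
    have h : δ ^ 3 ≤ ε := (pow_le_of_le_one hδpos.le hδ1 (by norm_num)).trans hδε
    rw [div_le_div_iff₀ hε (by positivity)]
    linarith
  have hPr := Pr_pseudoRandom (L := L) hppos.le hp1 hε hδpos hδ1 hnone
    ((mul_le_mul_of_nonneg_right hpow hlogpos.le).trans hnp)
    ((mul_le_mul_of_nonneg_right hpow' hlogpos.le).trans hnp) hpL
  refine le_trans (by linarith) (hPr.trans (Pr_mono hppos.le hp1 ?_))
  intro G hPR H _ hH P' P _ hP
  have hΓ : G \ H ≤ (G \ H) ⊔ listGraph P' := le_sup_left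
  refine ⟨↑(ends (G \ H) P (Nat.log 2 n + 1 + ⌈2 / ε⌉₊ + 1)), ?_, ?_⟩
  · rw [Set.ncard_coe_finset]
    exact many_ends hppos hε hε1 hn1 hδ hPR hH hΓ hP hLpos hLn hL2 htL
  · intro v hv
    obtain ⟨Q, hQ, hQv⟩ := mem_ends.1 (Finset.mem_coe.1 hv)
    obtain ⟨hpath, hperm, hlast⟩ := reach_path hΓ hP.1 Q hQ
    refine ⟨Q, ⟨hpath, fun R hR => ?_⟩, hQv, hlast, List.toFinset_eq_of_perm _ _ hperm⟩
    rw [hperm.length_eq]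
    exact hP.2 R hR

end Resilience
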